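/- Assume V ∈ C¹(ℝ^N) satisfies (V1) and (V2) and that ∇V is locally Lipschitz continuous on ℝ^N. Let c_dw ∈ (0, ν₀) be as in the double-well separation property, let c_n ∈ (0, c_dw) with c_n → 0⁺, and for each n let q_n be a C² solution of q̈ = ∇V(q) on ℝ with ½|q̇_n(t)|² − V(q_n(t)) = −c_n for all t, admitting a connecting time interval (α_n, ω_n) (−∞ ≤ α_n < ω_n ≤ +∞) such that: V(q_n(t)) > c_n on (α_n, ω_n); dist(q_n(t), 𝒱^{c_n}₋) → 0 as t → α_n⁺, and if α_n > −∞ then q̇_n(α_n) = 0, V(q_n(α_n)) = c_n and q_n(α_n) ∈ 𝒱^{c_n}₋; dist(q_n(t), 𝒱^{c_n}₊) → 0 as t → ω_n⁻, and if ω_n < +∞ then q̇_n(ω_n) = 0, V(q_n(ω_n)) = c_n and q_n(ω_n) ∈ 𝒱^{c_n}₊; J_{c_n,(α_n,ω_n)}(q_n) = m_{c_n}; and ‖q_n‖_{L^∞(ℝ)} = ‖q_n‖_{L^∞((α_n,ω_n))}. Then there exist real translations ζ_n and a subsequence along which q_n(· − ζ_n) → q₀ in C²_loc(ℝ, ℝ^N),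 where q₀ is a heteroclinic solution between a₋ and a₊: q̈₀ = ∇V(q₀) on ℝ, q₀(t) → a₋ and q̇₀(t) → 0 as t → −∞, and q₀(t) → a₊ and q̇₀(t) → 0 as t → +∞. -/

import Mathlib

open MeasureTheory Filter Metric Set Topology
open scoped ENNReal

noncomputable section

/-- Euclidean space `ℝ^N`. -/
abbrev Euc (N : ℕ) := EuclideanSpace ℝ (Fin N)

/-- Distance between two subsets of a metric space. -/
def setDist {E : Type*} [PseudoMetricSpace E] (A B : Set E) : ℝ :=
  sInf ((fun p : E × E => dist p.1 p.2) '' (A ×ˢ B))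

/-- `q ∈ H¹_loc(ℝ, ℝ^N)` with derivative `q'`: `q` is locally absolutely continuous with
locally square-integrable derivative `q'`. -/
def IsH1loc {N : ℕ} (q q' : ℝ → Euc N) : Prop :=
  LocallyIntegrable q' volume ∧
  (∀ a b : ℝ, IntegrableOn (fun t => ‖q' t‖ ^ 2) (Icc a b) volume) ∧
  (∀ a b : ℝ, q b - q a = ∫ t in a..b, q' t)

/-- The action `J_{c,I}(q) = ∫_I (½|q̇(t)|² + (V(q(t)) − c)) dt`, valued in `[0,+∞]`. -/
def lagJ {N : ℕ} (V : Euc N → ℝ) (c : ℝ) (q q' : ℝ → Euc N) (I : Set ℝ) : ℝ≥0∞ :=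
  ∫⁻ t in I, ENNReal.ofReal (2⁻¹ * ‖q' t‖ ^ 2 + (V (q t) - c))

/-- The admissible class `Γ_c` of pairs (function, derivative): `q ∈ H¹_loc`,
`V(q(t)) ≥ c` for all `t`, `liminf_{t→−∞} dist(q(t),𝒱⁻) = 0` and
`liminf_{t→+∞} dist(q(t),𝒱⁺) = 0`. -/
def Gamma {N : ℕ} (V : Euc N → ℝ) (c : ℝ) (Vm Vp : Set (Euc N)) :
    Set ((ℝ → Euc N) × (ℝ → Euc N)) :=
  {p | IsH1loc p.1 p.2 ∧ (∀ t, c ≤ V (p.1 t)) ∧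
    (∀ ε > 0, ∃ᶠ t in atBot, infDist (p.1 t) Vm < ε) ∧
    (∀ ε > 0, ∃ᶠ t in atTop, infDist (p.1 t) Vp < ε)}

/-- `m_c := inf_{q ∈ Γ_c} J_c(q)`. -/
def mc {N : ℕ} (V : Euc N → ℝ) (c : ℝ) (Vm Vp : Set (Euc N)) : ℝ≥0∞ :=
  ⨅ (p) (_ : p ∈ Gamma V c Vm Vp), lagJ V c p.1 p.2 univ

/-- Coercivity condition (1.7) for the constant `R`. -/
def Coercive {N : ℕ} (V : Euc N → ℝ) (c : ℝ) (Vm Vp : Set (Euc N)) (R : ℝ) : Prop :=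
  mc V c Vm Vp =
    ⨅ (p) (_ : p ∈ Gamma V c Vm Vp) (_ : ∀ t, ‖p.1 t‖ ≤ R), lagJ V c p.1 p.2 univ

/-!
The part of `qₙ` on its connecting interval, frozen outside it, minimizes the action in `Γ_{cₙ}`,
so a competitor yields a uniform bound on its action. Crossing a spherical shell on which `V` is
bounded below costs an amount of action proportional to its thickness, so the `qₙ` are uniformly
bounded, and compactness of the Newton flow gives limits of translates. Translating the last time
at which `qₙ` leaves the ball of radius `|a₋ − a₊| / 2` around `a₋` to the origin prevents the limit
`q₀` from being an equilibrium at a well.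

By Fatou's lemma `V ∘ q₀` is integrable, so `V ∘ q₀ → 0` at `±∞`, and each end of `q₀` converges to
a well; the choice of the translation forces `a₊` at `+∞`. If `q₀` also tended to `a₊` at `-∞`, then
`qₙ` would be close to `a₊` before its departure, and a cheap segment into `𝒱₊` at that moment would
save the action spent afterwards, which contradicts minimality.
-/

section RealFunctions

lemma exists_last_crossing {f : ℝ → ℝ} {a b r : ℝ} (hf : ContinuousOn f (Icc a b)) (hab : a ≤ b)
    (ha : f a ≤ r) (hb : r ≤ f b) : ∃ s ∈ Icc a b, f s = r ∧ ∀ t ∈ Icc s b, r ≤ f t := by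
  have hcompact : IsCompact (Icc a b ∩ f ⁻¹' {r}) :=
    isCompact_Icc.of_isClosed_subset (hf.preimage_isClosed_of_isClosed isClosed_Icc
      isClosed_singleton) inter_subset_left
  obtain ⟨s, ⟨hs, hsr⟩, hmax⟩ :=
    hcompact.exists_isGreatest (intermediate_value_Icc hab hf ⟨ha, hb⟩)
  refine ⟨s, hs, hsr, fun t ht => not_lt.1 fun hlt => ?_⟩
  obtain ⟨u, hu, hur⟩ := intermediate_value_Icc ht.2
    (hf.mono (Icc_subset_Icc_left (hs.1.trans ht.1))) ⟨hlt.le, hb⟩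
  have hus : u ≤ s := hmax ⟨⟨hs.1.trans (ht.1.trans hu.1), hu.2⟩, hur⟩
  have hts : t = u := le_antisymm hu.1 (hus.trans ht.1)
  exact hlt.ne (hts ▸ hur)

lemma exists_first_crossing {f : ℝ → ℝ} {a b r : ℝ} (hf : ContinuousOn f (Icc a b)) (hab : a ≤ b)
    (ha : r ≤ f a) (hb : f b ≤ r) : ∃ s ∈ Icc a b, f s = r ∧ ∀ t ∈ Icc a s, r ≤ f t := by
  have hneg : ContinuousOn (fun t => f (-t)) (Icc (-b) (-a)) :=
    hf.comp continuousOn_neg fun t ht => ⟨le_neg.1 ht.2, neg_le.1 ht.1⟩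
  obtain ⟨s, hs, hsr, hge⟩ :=
    exists_last_crossing hneg (neg_le_neg hab) (by simpa using hb) (by simpa using ha)
  exact ⟨-s, ⟨le_neg.1 hs.2, neg_le.1 hs.1⟩, hsr, fun t ht => by
    simpa using hge (-t) ⟨le_neg.1 ht.2, neg_le_neg ht.1⟩⟩

/- A bounded function with bounded derivative is no worse than its square, whose derivative
`2 h h'` is integrable along with `h`. -/
lemma tendsto_zero_of_integrable_of_bounded_deriv {h h' : ℝ → ℝ} {M L : ℝ}
    (hderiv : ∀ t, HasDerivAt h (h' t) t) (hM : ∀ t, |h t| ≤ M) (hL : ∀ t, |h' t| ≤ L)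
    (hint : Integrable h) : Tendsto h atBot (𝓝 0) ∧ Tendsto h atTop (𝓝 0) := by
  have hsq_deriv : ∀ t, HasDerivAt (fun t => h t * h t) (h' t * h t + h t * h' t) t :=
    fun t => (hderiv t).mul (hderiv t)
  have hmeas : AEStronglyMeasurable h' := by
    rw [show h' = deriv h from funext fun t => (hderiv t).deriv.symm]
    exact aestronglyMeasurable_deriv h volume
  have hsq_int : Integrable fun t => h t * h t :=
    hint.bdd_mul hint.aestronglyMeasurable (ae_of_all _ hM)
  have hprod : Integrable fun t => h' t * h t := hint.bdd_mul hmeas (ae_of_all _ hL)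
  have hsq_deriv_int : Integrable fun t => h' t * h t + h t * h' t :=
    hprod.add (by simpa only [mul_comm] using hprod)
  have of_sq : ∀ {l : Filter ℝ}, Tendsto (fun t => h t * h t) l (𝓝 0) → Tendsto h l (𝓝 0) :=
    fun hl => (tendsto_zero_iff_abs_tendsto_zero _).2 <| by
      simpa [Function.comp_def, Real.sqrt_mul_self_eq_abs] using hl.sqrt
  exact ⟨of_sq (tendsto_zero_of_hasDerivAt_of_integrableOn_Iic (a := 0) (fun t _ => hsq_deriv t)
      hsq_deriv_int.integrableOn hsq_int.integrableOn),
    of_sq (tendsto_zero_of_hasDerivAt_of_integrableOn_Ioi (a := 0) (fun t _ => hsq_deriv t)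
      hsq_deriv_int.integrableOn hsq_int.integrableOn)⟩

end RealFunctions

section Compactness

lemma tendsto_of_tendsto_comp_of_isCompact {ι X Y : Type*} [TopologicalSpace X]
    [TopologicalSpace Y] [T2Space Y] {l : Filter ι} {f : ι → X} {g : X → Y} {K : Set X} {a : X}
    (hK : IsCompact K) (hf : ∀ᶠ i in l, f i ∈ K) (hg : Continuous g)
    (ha : ∀ x ∈ K, g x = g a → x = a) (hlim : Tendsto (g ∘ f) l (𝓝 (g a))) :
    Tendsto f l (𝓝 a) :=
  hK.tendsto_nhds_of_unique_mapClusterPt hf fun x hx hcluster =>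
    ha x hx <| eq_of_nhds_neBot <|
      NeBot.mono (hcluster.continuousAt_comp hg.continuousAt) (inf_le_inf_left _ hlim)

lemma tendstoLocallyUniformly_continuous_comp {ι X Y Z : Type*} [TopologicalSpace X]
    [WeaklyLocallyCompactSpace X] [UniformSpace Y] [UniformSpace Z] {l : Filter ι}
    {f : ι → X → Y} {f₀ : X → Y} {g : Y → Z}
    (hg : Continuous g) (hf : ∀ i, Continuous (f i)) (hf₀ : Continuous f₀)
    (h : TendstoLocallyUniformly f f₀ l) :
    TendstoLocallyUniformly (fun i x => g (f i x)) (fun x => g (f₀ x)) l := by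
  have hC : Tendsto (fun i => (⟨f i, hf i⟩ : C(X, Y))) l (𝓝 ⟨f₀, hf₀⟩) :=
    ContinuousMap.tendsto_iff_tendstoLocallyUniformly.2 h
  exact ContinuousMap.tendsto_iff_tendstoLocallyUniformly.1
    (((ContinuousMap.continuous_postcomp ⟨g, hg⟩).tendsto _).comp hC)

lemma exists_subseq_tendstoLocallyUniformly_of_lipschitzWith {X Y : Type*} [PseudoMetricSpace X]
    [LocallyCompactSpace X] [SigmaCompactSpace X] [MetricSpace Y] {L : NNReal} {K : Set Y}
    (hK : IsCompact K) {f : ℕ → X → Y} (hL : ∀ n, LipschitzWith L (f n))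
    (hfK : ∀ n x, f n x ∈ K) :
    ∃ φ : ℕ → ℕ, StrictMono φ ∧ ∃ g : X → Y,
      TendstoLocallyUniformly (fun n => f (φ n)) g atTop := by
  let S : Set C(X, Y) := {u | LipschitzWith L u ∧ ∀ x, u x ∈ K}
  have himage : ContinuousMap.toFun '' S =
      (⋂ x, ⋂ y, {u | dist (u x) (u y) ≤ L * dist x y}) ∩ univ.pi fun _ => K := by
    ext u
    simp only [mem_inter_iff, mem_iInter, mem_ofPred_eq, ← lipschitzWith_iff_dist_le_mul]
    exact ⟨by rintro ⟨v, hv, rfl⟩; exact ⟨hv.1, fun x _ => hv.2 x⟩,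
      fun ⟨hlip, huK⟩ => ⟨⟨u, hlip.continuous⟩, ⟨hlip, fun x => huK x trivial⟩, rfl⟩⟩
  have hS : IsCompact S := by
    refine ArzelaAscoli.isCompact_of_equicontinuous S ?_
      (LipschitzWith.uniformEquicontinuous _ L fun u => u.2.1).equicontinuous
    rw [himage]
    exact (isCompact_univ_pi fun _ => hK).inter_left <| isClosed_iInter fun x =>
      isClosed_iInter fun y =>
        isClosed_le ((continuous_apply x).dist (continuous_apply y)) continuous_const
  obtain ⟨g, -, φ, hφ, hg⟩ := hS.isSeqCompact (x := fun n => ⟨f n, (hL n).continuous⟩)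
    fun n => ⟨hL n, hfK n⟩
  exact ⟨φ, hφ, g, ContinuousMap.tendsto_iff_tendstoLocallyUniformly.1 hg⟩

end Compactness

section AutonomousODE

variable {F : Type*} [NormedAddCommGroup F] [NormedSpace ℝ F] {X : F → F} {K : Set F}

lemma exists_subseq_tendsto_solution (hX : Continuous X) (hK : IsCompact K) {z : ℕ → ℝ → F}
    (hz : ∀ n t, HasDerivAt (z n) (X (z n t)) t) (hzK : ∀ n t, z n t ∈ K) :
    ∃ φ : ℕ → ℕ, StrictMono φ ∧ ∃ z₀ : ℝ → F,
      TendstoLocallyUniformly (fun n => z (φ n)) z₀ atTop ∧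
      (∀ t, z₀ t ∈ K) ∧ ∀ t, HasDerivAt z₀ (X (z₀ t)) t := by
  obtain ⟨C, hC⟩ := hK.exists_bound_of_continuousOn hX.continuousOn
  have hlip : ∀ n, LipschitzWith C.toNNReal (z n) := fun n =>
    lipschitzWith_of_nnnorm_deriv_le (fun t => (hz n t).differentiableAt) fun t => by
      rw [(hz n t).deriv]
      exact NNReal.le_toNNReal_of_coe_le (hC _ (hzK n t))
  obtain ⟨φ, hφ, z₀, hlim⟩ := exists_subseq_tendstoLocallyUniformly_of_lipschitzWith hK hlip hzK
  have hcont : ∀ n, Continuous (z (φ n)) := fun n => (hlip _).continuous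
  have hcont₀ : Continuous z₀ := hlim.continuous (Frequently.of_forall hcont)
  have hpt : ∀ t, Tendsto (fun n => z (φ n) t) atTop (𝓝 (z₀ t)) := fun t =>
    hlim.tendstoLocallyUniformlyOn.tendsto_at (mem_univ t)
  refine ⟨φ, hφ, z₀, hlim, fun t => hK.isClosed.mem_of_tendsto (hpt t)
    (Eventually.of_forall fun n => hzK _ t), fun t => ?_⟩
  exact hasDerivAt_of_tendstoLocallyUniformlyOn isOpen_univ
    (tendstoLocallyUniformlyOn_univ.2
      (tendstoLocallyUniformly_continuous_comp hX hcont hcont₀ hlim))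
    (Eventually.of_forall fun n s _ => hz (φ n) s) (fun s _ => hpt s) (mem_univ t)

lemma eq_const_of_eq_equilibrium (hX : LocallyLipschitz X) (hK : IsCompact K) {z : ℝ → F}
    (hz : ∀ t, HasDerivAt z (X (z t)) t) (hzK : ∀ t, z t ∈ K) {t₀ : ℝ}
    (heq : X (z t₀) = 0) (t : ℝ) : z t = z t₀ := by
  obtain ⟨L, hL⟩ := hX.locallyLipschitzOn.exists_lipschitzOnWith_of_compact hK
  have hconst : ∀ s, HasDerivAt (fun _ : ℝ => z t₀) (X (z t₀)) s := fun s =>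
    heq ▸ hasDerivAt_const s _
  exact congrFun (ODE_solution_unique_univ (v := fun _ => X) (s := fun _ => K) (fun _ => hL)
    (fun s => ⟨hz s, hzK s⟩) (fun s => ⟨hconst s, hzK t₀⟩) rfl) t

end AutonomousODE

lemma gradient_eq_zero_of_isLocalMin {E : Type*} [NormedAddCommGroup E] [InnerProductSpace ℝ E]
    [CompleteSpace E] {V : E → ℝ} {a : E} (h : IsLocalMin V a) : gradient V a = 0 := by
  rw [gradient, h.fderiv_eq_zero, map_zero]

section H1Curves

variable {N : ℕ} {V : Euc N → ℝ} {c : ℝ} {q q' g g' : ℝ → Euc N}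

namespace IsH1loc

lemma intervalIntegrable (hq : IsH1loc q q') (a b : ℝ) : IntervalIntegrable q' volume a b :=
  (hq.1.integrableOn_isCompact isCompact_uIcc).intervalIntegrable

lemma continuous (hq : IsH1loc q q') : Continuous q := by
  have hprimitive : q = fun t => q 0 + ∫ u in (0 : ℝ)..t, q' u :=
    funext fun t => by rw [← hq.2.2 0 t, add_sub_cancel]
  rw [hprimitive]
  exact continuous_const.add (intervalIntegral.continuous_primitive hq.intervalIntegrable 0)

lemma piecewise (hq : IsH1loc q q') (hg : IsH1loc g g') {s : ℝ} (hs : q s = g s) :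
    IsH1loc ((Iic s).piecewise q g) ((Iic s).piecewise q' g') := by
  have hint : LocallyIntegrable ((Iic s).piecewise q' g') volume :=
    locallyIntegrable_iff.2 fun k hk => Integrable.piecewise measurableSet_Iic
      (hq.1.integrableOn_isCompact hk).integrableOn (hg.1.integrableOn_isCompact hk).integrableOn
  have hsq : (fun t => ‖(Iic s).piecewise q' g' t‖ ^ 2) =
      (Iic s).piecewise (fun t => ‖q' t‖ ^ 2) fun t => ‖g' t‖ ^ 2 := by
    ext t
    exact (Iic s).apply_piecewise q' g' fun _ x => ‖x‖ ^ 2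
  have from_s : ∀ b, (Iic s).piecewise q g b - q s = ∫ t in s..b, (Iic s).piecewise q' g' t := by
    intro b
    rcases le_or_gt b s with hb | hb
    · rw [piecewise_eq_of_mem _ _ _ (mem_Iic.2 hb), hq.2.2 s b]
      refine intervalIntegral.integral_congr_ae (ae_of_all _ fun t ht => ?_)
      rw [uIoc_of_ge hb] at ht
      exact (piecewise_eq_of_mem _ _ _ (mem_Iic.2 ht.2)).symm
    · rw [piecewise_eq_of_notMem _ _ _ (notMem_Iic.2 hb), hs, hg.2.2 s b]
      refine intervalIntegral.integral_congr_ae (ae_of_all _ fun t ht => ?_)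
      rw [uIoc_of_le hb.le] at ht
      exact (piecewise_eq_of_notMem _ _ _ (notMem_Iic.2 ht.1)).symm
  refine ⟨hint, fun a b => ?_, fun a b => ?_⟩
  · rw [hsq]
    exact Integrable.piecewise measurableSet_Iic (hq.2.1 a b).integrableOn
      (hg.2.1 a b).integrableOn
  · rw [← sub_sub_sub_cancel_right _ _ (q s), from_s, from_s]
    exact intervalIntegral.integral_interval_sub_left
      (hint.integrableOn_isCompact isCompact_uIcc).intervalIntegrable
      (hint.integrableOn_isCompact isCompact_uIcc).intervalIntegrable

/- `|q'| ≤ ½ + ½|q'|²`, and the constant is absorbed by the potential excess `h`. -/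
lemma edist_le_lagJ (hq : IsH1loc q q') {h s t : ℝ} (hh : 0 < h) (hst : s ≤ t)
    (hVh : ∀ u ∈ Icc s t, c + h ≤ V (q u)) :
    edist (q t) (q s) ≤ ENNReal.ofReal (1 + h⁻¹) * lagJ V c q q' (Ioc s t) := by
  have pointwise : ∀ u ∈ Ioc s t, ‖q' u‖ₑ ≤
      ENNReal.ofReal (1 + h⁻¹) * ENNReal.ofReal (2⁻¹ * ‖q' u‖ ^ 2 + (V (q u) - c)) := by
    intro u hu
    rw [← ofReal_norm, ← ENNReal.ofReal_mul (by positivity)]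
    refine ENNReal.ofReal_le_ofReal ?_
    have hexcess : 1 ≤ h⁻¹ * (V (q u) - c) := by
      rw [inv_mul_eq_div, one_le_div hh]
      linarith [hVh u (Ioc_subset_Icc_self hu)]
    have hnonneg : 0 ≤ h⁻¹ * (2⁻¹ * ‖q' u‖ ^ 2) := by positivity
    nlinarith [hVh u (Ioc_subset_Icc_self hu), sq_nonneg (‖q' u‖ - 1)]
  calc edist (q t) (q s) = ‖∫ u in Ioc s t, q' u‖ₑ := by
        rw [edist_eq_enorm_sub, hq.2.2 s t, intervalIntegral.integral_of_le hst]
    _ ≤ ∫⁻ u in Ioc s t, ‖q' u‖ₑ := enorm_integral_le_lintegral_enorm _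
    _ ≤ ∫⁻ u in Ioc s t, ENNReal.ofReal (1 + h⁻¹) *
          ENNReal.ofReal (2⁻¹ * ‖q' u‖ ^ 2 + (V (q u) - c)) :=
        setLIntegral_mono' measurableSet_Ioc pointwise
    _ = ENNReal.ofReal (1 + h⁻¹) * lagJ V c q q' (Ioc s t) :=
        lintegral_const_mul' _ _ ENNReal.ofReal_ne_top

end IsH1loc

lemma lagJ_Iic_add_Ioi (V : Euc N → ℝ) (c : ℝ) (q q' : ℝ → Euc N) (s : ℝ) :
    lagJ V c q q' (Iic s) + lagJ V c q q' (Ioi s) = lagJ V c q q' univ := by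
  simp only [lagJ, ← compl_Iic, Measure.restrict_univ]
  exact lintegral_add_compl _ measurableSet_Iic

lemma lagJ_mono (V : Euc N → ℝ) (c : ℝ) (q q' : ℝ → Euc N) {I J : Set ℝ} (hIJ : I ⊆ J) :
    lagJ V c q q' I ≤ lagJ V c q q' J :=
  lintegral_mono_set hIJ

lemma lagJ_congr {I : Set ℝ} (hI : MeasurableSet I) (hq : EqOn q g I) (hq' : EqOn q' g' I) :
    lagJ V c q q' I = lagJ V c g g' I :=
  setLIntegral_congr_fun hI fun t ht => by simp only [hq ht, hq' ht]

lemma lagJ_piecewise (V : Euc N → ℝ) (c : ℝ) (q q' g g' : ℝ → Euc N) (s : ℝ) :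
    lagJ V c ((Iic s).piecewise q g) ((Iic s).piecewise q' g') univ =
      lagJ V c q q' (Iic s) + lagJ V c g g' (Ioi s) := by
  rw [← lagJ_Iic_add_Ioi _ _ _ _ s,
    lagJ_congr measurableSet_Iic (piecewise_eqOn _ q g) (piecewise_eqOn _ q' g'),
    lagJ_congr measurableSet_Ioi (compl_Iic (a := s) ▸ piecewise_eqOn_compl _ q g)
      (compl_Iic (a := s) ▸ piecewise_eqOn_compl _ q' g')]

lemma lintegral_potential_comp_add_const_le_lagJ (hV : Continuous V) (hq : Continuous q)
    {I : Set ℝ} (hI : MeasurableSet I) (τ : ℝ) :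
    ∫⁻ t in (· + τ) ⁻¹' I, ENNReal.ofReal (V (q (t + τ)) - c) ≤ lagJ V c q q' I := by
  rw [(measurePreserving_add_right volume τ).setLIntegral_comp_preimage hI
    (f := fun t => ENNReal.ofReal (V (q t) - c)) (by fun_prop)]
  exact lintegral_mono fun t =>
    ENNReal.ofReal_le_ofReal (le_add_of_nonneg_left (by positivity))

lemma lagJ_le_mul_volume {C : ℝ} {J : Set ℝ} (hJ : MeasurableSet J)
    (hC : ∀ t ∈ J, 2⁻¹ * ‖q' t‖ ^ 2 + (V (q t) - c) ≤ C) :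
    lagJ V c q q' J ≤ ENNReal.ofReal C * volume J :=
  (setLIntegral_mono' hJ fun t ht => ENNReal.ofReal_le_ofReal (hC t ht)).trans
    (setLIntegral_const J _).le

end H1Curves

section Clamp

variable {α ω : EReal}

/-- The real points of the extended interval `(α, ω)`. -/
def realIoo (α ω : EReal) : Set ℝ := {t : ℝ | α < (t : EReal) ∧ (t : EReal) < ω}

/-- The nearest-point projection of `ℝ` onto the closure of `realIoo α ω`, for `α < ω`. Stopping a
curve at finite endpoints by precomposition with `clamp α ω` treats finite and infinite connecting
intervals uniformly. -/
def clamp (α ω : EReal) (t : ℝ) : ℝ := (max α (min (t : EReal) ω)).toReal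

lemma isOpen_realIoo : IsOpen (realIoo α ω) := isOpen_Ioo.preimage continuous_coe_real_ereal

lemma coe_clamp (h : α < ω) (t : ℝ) : (clamp α ω t : EReal) = max α (min (t : EReal) ω) :=
  EReal.coe_toReal
    (max_lt (h.trans_le le_top) ((min_le_left _ _).trans_lt (EReal.coe_lt_top t))).ne
    (lt_max_of_lt_right (lt_min (EReal.bot_lt_coe t) (bot_le.trans_lt h))).ne'

lemma continuous_clamp (h : α < ω) : Continuous (clamp α ω) := by
  refine EReal.continuousOn_toReal.comp_continuous
    (continuous_const.max (continuous_coe_real_ereal.min continuous_const)) fun t => ?_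
  rw [← coe_clamp h]
  simp

lemma clamp_of_le_of_le {t : ℝ} (hα : α ≤ t) (hω : t ≤ ω) : clamp α ω t = t := by
  rw [clamp, min_eq_left hω, max_eq_right hα, EReal.toReal_coe]

lemma clamp_of_mem {t : ℝ} (ht : t ∈ realIoo α ω) : clamp α ω t = t :=
  clamp_of_le_of_le ht.1.le ht.2.le

lemma coe_clamp_of_le (h : α < ω) {t : ℝ} (ht : (t : EReal) ≤ α) : (clamp α ω t : EReal) = α := by
  rw [coe_clamp h, max_eq_left ((min_le_left _ _).trans ht)]

lemma coe_clamp_of_ge (h : α < ω) {t : ℝ} (ht : ω ≤ t) : (clamp α ω t : EReal) = ω := by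
  rw [coe_clamp h, min_eq_right ht, max_eq_right h.le]

lemma clamp_mem_uIcc {τ t : ℝ} (hτ : τ ∈ realIoo α ω) : clamp α ω t ∈ uIcc τ t := by
  have h : α < ω := hτ.1.trans hτ.2
  rcases le_total τ t with hτt | htτ
  · have hτt' : (τ : EReal) ≤ t := EReal.coe_le_coe_iff.2 hτt
    rw [uIcc_of_le hτt, mem_Icc, ← EReal.coe_le_coe_iff, ← EReal.coe_le_coe_iff, coe_clamp h]
    exact ⟨le_max_of_le_right (le_min hτt' hτ.2.le),
      max_le (hτ.1.le.trans hτt') (min_le_left _ _)⟩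
  · have htτ' : (t : EReal) ≤ τ := EReal.coe_le_coe_iff.2 htτ
    rw [uIcc_of_ge htτ, mem_Icc, ← EReal.coe_le_coe_iff, ← EReal.coe_le_coe_iff, coe_clamp h]
    exact ⟨le_max_of_le_right (le_min le_rfl (htτ'.trans hτ.2.le)),
      max_le hτ.1.le ((min_le_left _ _).trans htτ')⟩

lemma realIoo_coe (a b : ℝ) : realIoo a b = Ioo a b :=
  ext fun _ => and_congr EReal.coe_lt_coe_iff EReal.coe_lt_coe_iff

lemma le_clamp {a : ℝ} (h : (a : EReal) < ω) (t : ℝ) : a ≤ clamp a ω t := by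
  rw [← EReal.coe_le_coe_iff, coe_clamp h]
  exact le_max_left _ _

lemma clamp_le {b : ℝ} (h : α < (b : EReal)) (t : ℝ) : clamp α b t ≤ b := by
  rw [← EReal.coe_le_coe_iff, coe_clamp h]
  exact max_le h.le (min_le_right _ _)

lemma clamp_of_le {a t : ℝ} (h : (a : EReal) < ω) (ht : t ≤ a) : clamp a ω t = a :=
  EReal.coe_injective (coe_clamp_of_le h (EReal.coe_le_coe_iff.2 ht))

lemma clamp_of_ge {b t : ℝ} (h : α < (b : EReal)) (ht : b ≤ t) : clamp α b t = b :=
  EReal.coe_injective (coe_clamp_of_ge h (EReal.coe_le_coe_iff.2 ht))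

lemma eq_clamp_of_notMem (h : α < ω) {t : ℝ} (ht : t ∉ realIoo α ω) :
    α = clamp α ω t ∨ ω = clamp α ω t := by
  rcases le_or_gt (t : EReal) α with hα | hα
  · exact .inl (coe_clamp_of_le h hα).symm
  · exact .inr (coe_clamp_of_ge h (not_lt.1 fun hω => ht ⟨hα, hω⟩)).symm

lemma clamp_eventuallyEq_id {t : ℝ} (ht : t ∈ realIoo α ω) : clamp α ω =ᶠ[𝓝 t] id :=
  (isOpen_realIoo.eventually_mem ht).mono fun _ hs => clamp_of_mem hs

lemma clamp_eventuallyEq_const (h : α < ω) {t : ℝ} (ht : t ∉ realIoo α ω)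
    (hα : α ≠ t) (hω : ω ≠ t) : clamp α ω =ᶠ[𝓝 t] fun _ => clamp α ω t := by
  rcases lt_or_gt_of_ne hα with hαt | htα
  · have hωt : ω < t := (not_lt.1 fun htω => ht ⟨hαt, htω⟩).lt_of_ne hω
    filter_upwards [continuous_coe_real_ereal.continuousAt.eventually_const_lt hωt] with s hs
    exact EReal.coe_injective <|
      (coe_clamp_of_ge h hs.le).trans (coe_clamp_of_ge h hωt.le).symm
  · filter_upwards [continuous_coe_real_ereal.continuousAt.eventually_lt_const htα] with s hs
    exact EReal.coe_injective <|
      (coe_clamp_of_le h hs.le).trans (coe_clamp_of_le h htα.le).symm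

variable {N : ℕ} {V : Euc N → ℝ} {c : ℝ} {q q' : ℝ → Euc N}

lemma hasDerivAt_comp_clamp (h : α < ω) (hq : ∀ t, HasDerivAt q (q' t) t) {t : ℝ}
    (hα : α ≠ t) (hω : ω ≠ t) :
    HasDerivAt (q ∘ clamp α ω) ((realIoo α ω).indicator q' t) t := by
  by_cases ht : t ∈ realIoo α ω
  · rw [indicator_of_mem ht]
    exact (hq t).congr_of_eventuallyEq ((clamp_eventuallyEq_id ht).fun_comp q)
  · rw [indicator_of_notMem ht]
    exact (hasDerivAt_const t _).congr_of_eventuallyEq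
      ((clamp_eventuallyEq_const h ht hα hω).fun_comp q)

lemma isH1loc_comp_clamp (h : α < ω) (hq : ∀ t, HasDerivAt q (q' t) t) (hq' : Continuous q') :
    IsH1loc (q ∘ clamp α ω) ((realIoo α ω).indicator q') := by
  have hint : LocallyIntegrable ((realIoo α ω).indicator q') volume :=
    hq'.locallyIntegrable.indicator isOpen_realIoo.measurableSet
  have hsq : (fun t => ‖(realIoo α ω).indicator q' t‖ ^ 2) =
      (realIoo α ω).indicator fun t => ‖q' t‖ ^ 2 := by
    ext t
    by_cases ht : t ∈ realIoo α ω <;> simp [ht]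
  have hendpoints : ((↑) ⁻¹' {α, ω} : Set ℝ).Countable :=
    (toFinite {α, ω}).countable.preimage EReal.coe_injective
  have hcont : Continuous (q ∘ clamp α ω) :=
    (continuous_iff_continuousAt.2 fun t => (hq t).continuousAt).comp (continuous_clamp h)
  refine ⟨hint, fun a b => ?_, fun a b => Eq.symm ?_⟩
  · rw [hsq]
    exact (hq'.norm.pow 2).integrableOn_Icc.indicator isOpen_realIoo.measurableSet
  · refine integral_eq_of_hasDerivAt_off_countable _ _ hendpoints hcont.continuousOn
      (fun t ht => ?_) (hint.integrableOn_isCompact isCompact_uIcc).intervalIntegrable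
    exact hasDerivAt_comp_clamp h hq (fun hα => ht.2 (.inl hα.symm)) fun hω => ht.2 (.inr hω.symm)

lemma lagJ_comp_clamp (h : α < ω) (hends : ∀ a : ℝ, α = a ∨ ω = a → V (q a) ≤ c) (J : Set ℝ) :
    lagJ V c (q ∘ clamp α ω) ((realIoo α ω).indicator q') J =
      lagJ V c q q' (realIoo α ω ∩ J) := by
  rw [lagJ, lagJ, ← setLIntegral_indicator isOpen_realIoo.measurableSet]
  refine lintegral_congr fun t => ?_
  by_cases ht : t ∈ realIoo α ω
  · simp [ht, clamp_of_mem ht]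
  · have hVt : V (q (clamp α ω t)) - c ≤ 0 := sub_nonpos.2 (hends _ (eq_clamp_of_notMem h ht))
    simp [ht, hVt]

end Clamp

section Minimizers

variable {N : ℕ} {V : Euc N → ℝ} {c : ℝ} {am ap : Euc N} {A B : Set (Euc N)}

/-- The separation property at level `c`: the sublevel set splits into the pieces `A = 𝒱^c₋` and
`B = 𝒱^c₊`, confined to small balls around the wells. -/
structure SplitsSublevel (V : Euc N → ℝ) (c : ℝ) (am ap : Euc N) (A B : Set (Euc N)) : Prop where
  sublevel_eq : {x | V x ≤ c} = A ∪ B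
  left_mem : am ∈ A
  right_mem : ap ∈ B
  left_subset : A ⊆ ball am (dist am ap / 4)
  right_subset : B ⊆ ball ap (dist am ap / 4)

namespace SplitsSublevel

lemma symm (h : SplitsSublevel V c am ap A B) : SplitsSublevel V c ap am B A where
  sublevel_eq := h.sublevel_eq.trans (union_comm A B)
  left_mem := h.right_mem
  right_mem := h.left_mem
  left_subset := dist_comm am ap ▸ h.right_subset
  right_subset := dist_comm am ap ▸ h.left_subset

lemma dist_pos (h : SplitsSublevel V c am ap A B) : 0 < dist am ap := by
  linarith [pos_of_mem_ball (h.left_subset h.left_mem)]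

lemma potential_le_of_mem_left (h : SplitsSublevel V c am ap A B) {x : Euc N} (hx : x ∈ A) :
    V x ≤ c :=
  h.sublevel_eq.symm.subset (.inl hx)

lemma mem_right_of_dist_le (h : SplitsSublevel V c am ap A B) {x : Euc N} (hx : V x ≤ c)
    (hd : dist x ap ≤ dist am ap / 2) : x ∈ B := by
  refine (h.sublevel_eq.subset hx).resolve_left fun hA => ?_
  linarith [mem_ball.1 (h.left_subset hA), dist_triangle_left am ap x, h.dist_pos]

lemma lt_potential_of_dist_eq (h : SplitsSublevel V c am ap A B) {x : Euc N}
    (hx : dist x ap = dist am ap / 2) : c < V x := by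
  refine not_le.1 fun hVx => ?_
  linarith [mem_ball.1 (h.right_subset (h.mem_right_of_dist_le hVx hx.le)), h.dist_pos]

lemma dist_lt_of_infDist_lt (h : SplitsSublevel V c am ap A B) {x : Euc N}
    (hx : infDist x A < dist am ap / 4) : dist x am < dist am ap / 2 := by
  obtain ⟨y, hy, hxy⟩ := (infDist_lt_iff ⟨am, h.left_mem⟩).1 hx
  linarith [dist_triangle x y am, mem_ball.1 (h.left_subset hy)]

end SplitsSublevel

lemma frequently_infDist_lt_of_eventually_mem {ι : Type*} {l : Filter ι} [l.NeBot]
    {f : ι → Euc N} (h : ∀ᶠ i in l, f i ∈ A) (ε : ℝ) (hε : 0 < ε) :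
    ∃ᶠ i in l, infDist (f i) A < ε :=
  (h.mono fun _ hi => (infDist_zero_of_mem hi).trans_lt hε).frequently

lemma mc_le_of_mem_Gamma {q q' : ℝ → Euc N} (h : (q, q') ∈ Gamma V c A B) :
    mc V c A B ≤ lagJ V c q q' univ :=
  iInf₂_le (q, q') h

namespace SplitsSublevel

lemma exists_lineMap_interval (h : SplitsSublevel V c am ap A B) (hV : Continuous V) :
    ∃ a b : ℝ, 0 ≤ a ∧ a < b ∧ b ≤ 1 ∧
      (AffineMap.lineMap (k := ℝ) am ap a ∈ A ∧ V (AffineMap.lineMap (k := ℝ) am ap a) = c) ∧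
      (AffineMap.lineMap (k := ℝ) am ap b ∈ B ∧ V (AffineMap.lineMap (k := ℝ) am ap b) = c) ∧
      ∀ t ∈ Icc a b, c ≤ V (AffineMap.lineMap (k := ℝ) am ap t) := by
  set γ : ℝ → Euc N := ⇑(AffineMap.lineMap (k := ℝ) am ap) with hγ
  have hVγ : Continuous fun t => V (γ t) := hV.comp AffineMap.lineMap_continuous
  have hd := h.dist_pos
  have hmid : c < V (γ 2⁻¹) := h.lt_potential_of_dist_eq <| by
    rw [hγ, dist_lineMap_right, Real.norm_of_nonneg (by norm_num)]
    ring
  obtain ⟨a, ha, hVa, hge_a⟩ := exists_last_crossing hVγ.continuousOn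
    (by norm_num : (0 : ℝ) ≤ 2⁻¹)
    (by simpa [hγ] using h.potential_le_of_mem_left h.left_mem) hmid.le
  obtain ⟨b, hb, hVb, hge_b⟩ := exists_first_crossing hVγ.continuousOn
    (by norm_num : 2⁻¹ ≤ (1 : ℝ)) hmid.le
    (by simpa [hγ] using h.symm.potential_le_of_mem_left h.right_mem)
  have hab : a < b := (ha.2.trans hb.1).lt_of_ne fun hab => hmid.ne <| by
    rw [← hVa, le_antisymm ha.2 (hab ▸ hb.1)]
  refine ⟨a, b, ha.1, hab, hb.2, ⟨h.symm.mem_right_of_dist_le hVa.le ?_, hVa⟩,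
    ⟨h.mem_right_of_dist_le hVb.le ?_, hVb⟩, fun t ht => ?_⟩
  · rw [hγ, dist_lineMap_left, Real.norm_of_nonneg ha.1, dist_comm ap]
    nlinarith [ha.2]
  · rw [hγ, dist_lineMap_right, Real.norm_of_nonneg (by linarith [hb.2])]
    nlinarith [hb.1]
  · rcases le_total t 2⁻¹ with htm | htm
    · exact hge_a t ⟨ht.1, htm⟩
    · exact hge_b t ⟨htm, ht.2⟩

lemma mc_le (h : SplitsSublevel V c am ap A B) (hV : Continuous V) {K : ℝ}
    (hK : ∀ x ∈ segment ℝ am ap, V x - c ≤ K) :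
    mc V c A B ≤ ENNReal.ofReal (2⁻¹ * dist am ap ^ 2 + K) := by
  obtain ⟨a, b, ha, hab, hb, ⟨hA, hVa⟩, ⟨hB, hVb⟩, hge⟩ := h.exists_lineMap_interval hV
  set γ : ℝ → Euc N := ⇑(AffineMap.lineMap (k := ℝ) am ap)
  have hab' : (a : EReal) < b := EReal.coe_lt_coe_iff.2 hab
  have hends : ∀ t : ℝ, (a : EReal) = t ∨ (b : EReal) = t → V (γ t) ≤ c := by
    simp only [EReal.coe_eq_coe_iff]
    rintro t (rfl | rfl)
    exacts [hVa.le, hVb.le]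
  have hadm : (γ ∘ clamp a b, (realIoo a b).indicator fun _ => ap - am) ∈ Gamma V c A B := by
    refine ⟨isH1loc_comp_clamp hab' (fun t => AffineMap.hasDerivAt_lineMap) continuous_const,
      fun t => hge _ ⟨le_clamp hab' t, clamp_le hab' t⟩,
      frequently_infDist_lt_of_eventually_mem ?_, frequently_infDist_lt_of_eventually_mem ?_⟩
    · filter_upwards [eventually_le_atBot a] with t ht
      simpa [clamp_of_le hab' ht] using hA
    · filter_upwards [eventually_ge_atTop b] with t ht
      simpa [clamp_of_ge hab' ht] using hB
  calc mc V c A B ≤ lagJ V c (γ ∘ clamp a b) ((realIoo a b).indicator fun _ => ap - am) univ :=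
        mc_le_of_mem_Gamma hadm
    _ = lagJ V c γ (fun _ => ap - am) (Ioo a b) := by
        rw [lagJ_comp_clamp hab' hends, inter_univ, realIoo_coe]
    _ ≤ ENNReal.ofReal (2⁻¹ * dist am ap ^ 2 + K) * volume (Ioo a b) := by
        refine lagJ_le_mul_volume measurableSet_Ioo fun t ht => ?_
        have hVt : V (γ t) - c ≤ K := hK _ <| segment_eq_image_lineMap ℝ am ap ▸
          mem_image_of_mem _ ⟨ha.trans ht.1.le, ht.2.le.trans hb⟩
        rw [← dist_eq_norm, dist_comm ap]
        linarith
    _ ≤ ENNReal.ofReal (2⁻¹ * dist am ap ^ 2 + K) := by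
        rw [Real.volume_Ioo]
        exact mul_le_of_le_one_right' (ENNReal.ofReal_le_one.2 (by linarith))

end SplitsSublevel

lemma exists_forall_mc_le (hV : Continuous V) (am ap : Euc N) :
    ∃ M, ∀ {c A B}, SplitsSublevel V c am ap A B → mc V c A B ≤ ENNReal.ofReal (M - c) := by
  obtain ⟨K, hK⟩ := (isCompact_Icc.image (AffineMap.lineMap_continuous
    (R := ℝ) (p := am) (q := ap))).bddAbove_image hV.continuousOn
  rw [← segment_eq_image_lineMap] at hK
  refine ⟨2⁻¹ * dist am ap ^ 2 + K, fun {c A B} h => ?_⟩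
  rw [add_sub_assoc]
  exact h.mc_le hV fun x hx => sub_le_sub_right (hK (mem_image_of_mem _ hx)) c

namespace SplitsSublevel

lemma mc_ne_top (h : SplitsSublevel V c am ap A B) (hV : Continuous V) : mc V c A B ≠ ⊤ := by
  obtain ⟨M, hM⟩ := exists_forall_mc_le hV am ap
  exact ne_top_of_le_ne_top ENNReal.ofReal_ne_top (hM h)

lemma exists_lineMap_right_time (h : SplitsSublevel V c am ap A B) (hV : Continuous V)
    {x : Euc N} (hx : c ≤ V x) (hd : dist x ap ≤ dist am ap / 2) :
    ∃ τ ∈ Icc (0 : ℝ) 1,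
      (AffineMap.lineMap (k := ℝ) x ap τ ∈ B ∧ V (AffineMap.lineMap (k := ℝ) x ap τ) = c) ∧
      ∀ t ∈ Icc 0 τ, c ≤ V (AffineMap.lineMap (k := ℝ) x ap t) := by
  obtain ⟨τ, hτ, hVτ, hge⟩ := exists_first_crossing
    (hV.comp (AffineMap.lineMap_continuous (R := ℝ) (p := x) (q := ap))).continuousOn zero_le_one
    (by simpa using hx) (by simpa using h.symm.potential_le_of_mem_left h.right_mem)
  refine ⟨τ, hτ, ⟨h.mem_right_of_dist_le hVτ.le ?_, hVτ⟩, hge⟩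
  rw [dist_lineMap_right, Real.norm_of_nonneg (by linarith [hτ.2])]
  exact (mul_le_of_le_one_left dist_nonneg (by linarith [hτ.1])).trans hd

end SplitsSublevel

lemma lagJ_lineMap_le {x y : Euc N} {r K s : ℝ} {J : Set ℝ} (hJ : MeasurableSet J)
    (hvol : volume J ≤ 1) (hxy : dist x y ≤ r)
    (hK : ∀ t ∈ J, V (AffineMap.lineMap (k := ℝ) x y (t - s)) - c ≤ K) :
    lagJ V c (fun t => AffineMap.lineMap (k := ℝ) x y (t - s)) (fun _ => y - x) J ≤
      ENNReal.ofReal (2⁻¹ * r ^ 2 + K) := by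
  refine (lagJ_le_mul_volume hJ fun t ht => ?_).trans (mul_le_of_le_one_right' hvol)
  rw [← dist_eq_norm, dist_comm]
  gcongr
  exact hK t ht

namespace SplitsSublevel

/- Follow the segment to `ap` until `V` first equals `c`, then rest there. -/
lemma exists_path_to_right (h : SplitsSublevel V c am ap A B) (hV : Continuous V) {x : Euc N}
    (hx : c ≤ V x) {r K : ℝ} (hr : r ≤ dist am ap / 2) (hd : dist x ap ≤ r)
    (hK : ∀ y ∈ closedBall ap r, V y - c ≤ K) (s : ℝ) :
    ∃ g g' : ℝ → Euc N, IsH1loc g g' ∧ g s = x ∧ (∀ t, s < t → c ≤ V (g t)) ∧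
      (∀ᶠ t in atTop, g t ∈ B) ∧
      lagJ V c g g' (Ioi s) ≤ ENNReal.ofReal (2⁻¹ * r ^ 2 + K) := by
  obtain ⟨τ, hτ, ⟨hB, hVτ⟩, hge⟩ := h.exists_lineMap_right_time hV hx (hd.trans hr)
  set γ : ℝ → Euc N := fun t => AffineMap.lineMap x ap (t - s) with hγ
  have hγ_end : γ (s + τ) = AffineMap.lineMap x ap τ := by simp [hγ]
  have hω : (⊥ : EReal) < (s + τ : ℝ) := EReal.bot_lt_coe _
  have hclamp : ∀ t ≤ s + τ, clamp ⊥ (s + τ : ℝ) t = t := fun t ht =>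
    clamp_of_le_of_le bot_le (EReal.coe_le_coe_iff.2 ht)
  have hends : ∀ t : ℝ, (⊥ : EReal) = t ∨ ((s + τ : ℝ) : EReal) = t → V (γ t) ≤ c := by
    rintro t (ht | ht)
    · exact absurd ht (EReal.coe_ne_bot t).symm
    · rw [← EReal.coe_injective ht, hγ_end, hVτ]
  have hIoo : realIoo ⊥ (s + τ : ℝ) ∩ Ioi s = Ioo s (s + τ) := by
    ext t
    simp only [realIoo, mem_inter_iff, mem_ofPred_eq, EReal.bot_lt_coe, true_and,
      EReal.coe_lt_coe_iff, mem_Ioi, mem_Ioo, and_comm]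
  refine ⟨γ ∘ clamp ⊥ (s + τ : ℝ), (realIoo ⊥ (s + τ : ℝ)).indicator fun _ => ap - x,
    isH1loc_comp_clamp hω (fun t => AffineMap.hasDerivAt_lineMap.comp_sub_const t s)
      continuous_const, ?_, fun t ht => ?_, ?_, ?_⟩
  · rw [Function.comp_apply, hclamp s (le_add_of_nonneg_right hτ.1)]
    simp [hγ]
  · rcases le_total t (s + τ) with htτ | htτ
    · rw [Function.comp_apply, hclamp t htτ]
      exact hge _ ⟨sub_nonneg.2 ht.le, sub_le_iff_le_add'.2 htτ⟩
    · rw [Function.comp_apply, clamp_of_ge hω htτ, hγ_end, hVτ]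
  · filter_upwards [eventually_ge_atTop (s + τ)] with t ht
    rwa [Function.comp_apply, clamp_of_ge hω ht, hγ_end]
  · rw [lagJ_comp_clamp hω hends, hIoo]
    refine lagJ_lineMap_le measurableSet_Ioo ?_ hd fun t ht => hK _ ?_
    · rw [Real.volume_Ioo]
      exact ENNReal.ofReal_le_one.2 (by linarith [hτ.2])
    · rw [mem_closedBall, dist_lineMap_right, Real.norm_of_nonneg (by linarith [ht.2, hτ.2])]
      exact (mul_le_of_le_one_left dist_nonneg (by linarith [ht.1])).trans hd

end SplitsSublevel

/-- `Q`, with derivative `Q'`, is admissible and realises the infimum `m_c`. -/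
structure IsMinimizer (V : Euc N → ℝ) (c : ℝ) (A B : Set (Euc N)) (Q Q' : ℝ → Euc N) :
    Prop where
  mem_Gamma : (Q, Q') ∈ Gamma V c A B
  lagJ_eq : lagJ V c Q Q' univ = mc V c A B

namespace IsMinimizer

variable {Q Q' : ℝ → Euc N}

lemma lagJ_Ioi_le (hQ : IsMinimizer V c A B Q Q') (hfin : mc V c A B ≠ ⊤) {s : ℝ}
    {g g' : ℝ → Euc N} (hg : IsH1loc g g') (hs : Q s = g s) (hVg : ∀ t, s < t → c ≤ V (g t))
    (hgB : ∀ᶠ t in atTop, g t ∈ B) : lagJ V c Q Q' (Ioi s) ≤ lagJ V c g g' (Ioi s) := by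
  obtain ⟨hH1, hVQ, hleft, -⟩ := hQ.mem_Gamma
  have hadm : ((Iic s).piecewise Q g, (Iic s).piecewise Q' g') ∈ Gamma V c A B := by
    refine ⟨hH1.piecewise hg hs, fun t => ?_, fun ε hε => ?_,
      frequently_infDist_lt_of_eventually_mem ?_⟩
    · rcases le_or_gt t s with ht | ht
      · simpa [ht] using hVQ t
      · simpa [ht] using hVg t ht
    · refine ((hleft ε hε).and_eventually (eventually_le_atBot s)).mono fun t ht => ?_
      simpa [ht.2] using ht.1
    · filter_upwards [hgB, eventually_gt_atTop s] with t htB hts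
      simpa [hts] using htB
  have hsum := lagJ_Iic_add_Ioi V c Q Q' s
  have hIic : lagJ V c Q Q' (Iic s) ≠ ⊤ :=
    ne_top_of_le_ne_top hfin (hQ.lagJ_eq ▸ lagJ_mono V c Q Q' (subset_univ _))
  refine ENNReal.le_of_add_le_add_left hIic ?_
  rw [hsum, hQ.lagJ_eq, ← lagJ_piecewise]
  exact mc_le_of_mem_Gamma hadm

lemma lagJ_Ioi_le_of_dist_le (hQ : IsMinimizer V c A B Q Q')
    (h : SplitsSublevel V c am ap A B) (hV : Continuous V) {s r K : ℝ}
    (hr : r ≤ dist am ap / 2) (hd : dist (Q s) ap ≤ r)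
    (hK : ∀ x ∈ closedBall ap r, V x - c ≤ K) :
    lagJ V c Q Q' (Ioi s) ≤ ENNReal.ofReal (2⁻¹ * r ^ 2 + K) := by
  obtain ⟨g, g', hg, hgs, hVg, hgB, hle⟩ :=
    h.exists_path_to_right hV (hQ.mem_Gamma.2.1 s) hr hd hK s
  exact (hQ.lagJ_Ioi_le (h.mc_ne_top hV) hg hgs.symm hVg hgB).trans hle

lemma norm_le (hQ : IsMinimizer V c A B Q Q') (h : SplitsSublevel V c am ap A B)
    {k ρ M : ℝ} (hk : 0 < k) (hρ : ∀ x, ρ ≤ ‖x‖ → c + k ≤ V x)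
    (hamρ : ‖am‖ + dist am ap / 2 ≤ ρ) (hM : 0 ≤ M) (hmc : mc V c A B ≤ ENNReal.ofReal M) (t : ℝ) :
    ‖Q t‖ ≤ ρ + (1 + k⁻¹) * M := by
  obtain ⟨hH1, -, hleft, -⟩ := hQ.mem_Gamma
  rcases le_total ‖Q t‖ ρ with hQt | hQt
  · exact hQt.trans (le_add_of_nonneg_right (by positivity))
  obtain ⟨s, hs, hst⟩ : ∃ s, ‖Q s‖ ≤ ρ ∧ s ≤ t := by
    obtain ⟨s, hs, hst⟩ := ((hleft _ (div_pos h.dist_pos four_pos)).and_eventually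
      (eventually_le_atBot t)).exists
    refine ⟨s, ?_, hst⟩
    linarith [h.dist_lt_of_infDist_lt hs, norm_le_norm_add_norm_sub' (Q s) am,
      dist_eq_norm (Q s) am]
  obtain ⟨u, hu, hQu, hge⟩ := exists_last_crossing hH1.continuous.norm.continuousOn hst hs hQt
  have hlength : edist (Q t) (Q u) ≤ ENNReal.ofReal ((1 + k⁻¹) * M) := calc
    edist (Q t) (Q u) ≤ ENNReal.ofReal (1 + k⁻¹) * lagJ V c Q Q' (Ioc u t) :=
        hH1.edist_le_lagJ hk hu.2 fun v hv => hρ _ (hge v hv)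
    _ ≤ ENNReal.ofReal (1 + k⁻¹) * ENNReal.ofReal M := by
        gcongr
        exact ((lagJ_mono V c Q Q' (subset_univ _)).trans_eq hQ.lagJ_eq).trans hmc
    _ = ENNReal.ofReal ((1 + k⁻¹) * M) := (ENNReal.ofReal_mul (by positivity)).symm
  rw [edist_dist, ENNReal.ofReal_le_ofReal_iff (by positivity), dist_eq_norm] at hlength
  linarith [norm_le_norm_add_norm_sub' (Q t) (Q u)]

end IsMinimizer

end Minimizers

/-- `q` is a solution of `q̈ = ∇V(q)` with energy `-c` whose arc over the connecting time interval
`(α, ω)` goes from `A` to `B` with minimal action and has the same supremum norm as `q`. The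
endpoints may be infinite. -/
structure IsConnectingSolution {N : ℕ} (V : Euc N → ℝ) (c : ℝ) (A B : Set (Euc N))
    (q : ℝ → Euc N) (α ω : EReal) : Prop where
  contDiff : ContDiff ℝ 2 q
  deriv_deriv : ∀ t, deriv (deriv q) t = gradient V (q t)
  energy : ∀ t, 2⁻¹ * ‖deriv q t‖ ^ 2 - V (q t) = -c
  lt : α < ω
  left_bot : α = ⊥ → Tendsto (fun t => infDist (q t) A) atBot (𝓝 0)
  left_coe : ∀ a : ℝ, α = a → deriv q a = 0 ∧ q a ∈ A
  right_top : ω = ⊤ → Tendsto (fun t => infDist (q t) B) atTop (𝓝 0)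
  right_coe : ∀ b : ℝ, ω = b → deriv q b = 0 ∧ q b ∈ B
  lagJ_eq : lagJ V c q (deriv q) (realIoo α ω) = mc V c A B
  norm_le : ∀ M, (∀ t ∈ realIoo α ω, ‖q t‖ ≤ M) → ∀ t, ‖q t‖ ≤ M

/-- `τ` is a time in `(α, ω)` at which `q` leaves `ball x r`, never to return before `ω`. -/
structure IsDepartureTime {N : ℕ} (x : Euc N) (r : ℝ) (q : ℝ → Euc N) (α ω : EReal) (τ : ℝ) :
    Prop where
  mem : τ ∈ realIoo α ω
  dist_eq : dist (q τ) x = r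
  le_dist : ∀ t ≥ τ, r ≤ dist (q (clamp α ω t)) x

namespace IsConnectingSolution

variable {N : ℕ} {V : Euc N → ℝ} {c : ℝ} {am ap : Euc N} {A B : Set (Euc N)} {q : ℝ → Euc N}
  {α ω : EReal}

lemma continuous (h : IsConnectingSolution V c A B q α ω) : Continuous q := h.contDiff.continuous

lemma hasDerivAt (h : IsConnectingSolution V c A B q α ω) (t : ℝ) :
    HasDerivAt q (deriv q t) t :=
  (h.contDiff.differentiable two_ne_zero t).hasDerivAt

lemma contDiff_deriv (h : IsConnectingSolution V c A B q α ω) : ContDiff ℝ 1 (deriv q) :=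
  h.contDiff.deriv'

lemma hasDerivAt_deriv (h : IsConnectingSolution V c A B q α ω) (t : ℝ) :
    HasDerivAt (deriv q) (gradient V (q t)) t := by
  rw [← h.deriv_deriv t]
  exact (h.contDiff_deriv.differentiable one_ne_zero t).hasDerivAt

lemma le_potential (h : IsConnectingSolution V c A B q α ω) (t : ℝ) : c ≤ V (q t) := by
  linarith [h.energy t, sq_nonneg ‖deriv q t‖]

lemma potential_endpoint (h : IsConnectingSolution V c A B q α ω) (a : ℝ) (ha : α = a ∨ ω = a) :
    V (q a) = c := by
  have hrest : deriv q a = 0 :=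
    ha.elim (fun hα => (h.left_coe a hα).1) fun hω => (h.right_coe a hω).1
  simpa [hrest] using h.energy a

lemma tendsto_infDist_left (h : IsConnectingSolution V c A B q α ω) :
    Tendsto (fun t => infDist (q (clamp α ω t)) A) atBot (𝓝 0) := by
  rcases eq_or_ne α ⊥ with rfl | hα
  · obtain ⟨b, -, hb⟩ := EReal.lt_iff_exists_real_btwn.1 h.lt
    refine (h.left_bot rfl).congr' ?_
    filter_upwards [eventually_le_atBot b] with t ht
    rw [clamp_of_le_of_le bot_le ((EReal.coe_le_coe_iff.2 ht).trans hb.le)]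
  · lift α to ℝ using ⟨(h.lt.trans_le le_top).ne, hα⟩
    refine tendsto_const_nhds.congr' ?_
    filter_upwards [eventually_le_atBot α] with t ht
    rw [clamp_of_le h.lt ht, infDist_zero_of_mem (h.left_coe α rfl).2]

lemma tendsto_infDist_right (h : IsConnectingSolution V c A B q α ω) :
    Tendsto (fun t => infDist (q (clamp α ω t)) B) atTop (𝓝 0) := by
  rcases eq_or_ne ω ⊤ with rfl | hω
  · obtain ⟨a, ha, -⟩ := EReal.lt_iff_exists_real_btwn.1 h.lt
    refine (h.right_top rfl).congr' ?_
    filter_upwards [eventually_ge_atTop a] with t ht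
    rw [clamp_of_le_of_le (ha.le.trans (EReal.coe_le_coe_iff.2 ht)) le_top]
  · lift ω to ℝ using ⟨hω, (bot_le.trans_lt h.lt).ne'⟩
    refine tendsto_const_nhds.congr' ?_
    filter_upwards [eventually_ge_atTop ω] with t ht
    rw [clamp_of_ge h.lt ht, infDist_zero_of_mem (h.right_coe ω rfl).2]

lemma isMinimizer (h : IsConnectingSolution V c A B q α ω) :
    IsMinimizer V c A B (q ∘ clamp α ω) ((realIoo α ω).indicator (deriv q)) where
  mem_Gamma := ⟨isH1loc_comp_clamp h.lt h.hasDerivAt h.contDiff_deriv.continuous,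
    fun _ => h.le_potential _,
    fun _ hε => (h.tendsto_infDist_left.eventually_lt_const hε).frequently,
    fun _ hε => (h.tendsto_infDist_right.eventually_lt_const hε).frequently⟩
  lagJ_eq := by
    rw [lagJ_comp_clamp h.lt (fun a ha => (h.potential_endpoint a ha).le), inter_univ, h.lagJ_eq]

lemma mem_realIoo_of_lt_potential (h : IsConnectingSolution V c A B q α ω) {t : ℝ}
    (hVt : c < V (q (clamp α ω t))) : t ∈ realIoo α ω :=
  by_contra fun ht => hVt.ne' (h.potential_endpoint _ (eq_clamp_of_notMem h.lt ht))

lemma exists_isDepartureTime (h : IsConnectingSolution V c A B q α ω)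
    (hs : SplitsSublevel V c am ap A B) :
    ∃ τ, IsDepartureTime am (dist am ap / 2) q α ω τ := by
  have hd : 0 < dist am ap / 4 := div_pos hs.dist_pos four_pos
  have hcont : Continuous fun t => dist (q (clamp α ω t)) am :=
    (h.continuous.comp (continuous_clamp h.lt)).dist continuous_const
  obtain ⟨T, hT⟩ : ∃ T, ∀ t ≥ T, dist am ap / 2 ≤ dist (q (clamp α ω t)) am := by
    refine eventually_atTop.1 ?_
    filter_upwards [h.tendsto_infDist_right.eventually_lt_const hd] with t ht
    linarith [hs.symm.dist_lt_of_infDist_lt (dist_comm am ap ▸ ht), dist_comm am ap,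
      dist_triangle_left am ap (q (clamp α ω t))]
  obtain ⟨s, hsA, hsT⟩ := ((h.tendsto_infDist_left.eventually_lt_const hd).and
    (eventually_le_atBot T)).exists
  obtain ⟨τ, -, hqτ, hge⟩ := exists_last_crossing hcont.continuousOn hsT
    (hs.dist_lt_of_infDist_lt hsA).le (hT T le_rfl)
  have hmem : τ ∈ realIoo α ω := h.mem_realIoo_of_lt_potential <|
    hs.symm.lt_potential_of_dist_eq (hqτ.trans (by rw [dist_comm]))
  refine ⟨τ, hmem, by rwa [clamp_of_mem hmem] at hqτ, fun t ht => ?_⟩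
  rcases le_total t T with htT | hTt
  · exact hge t ⟨ht, htT⟩
  · exact hT t hTt

lemma mem_realIoo_of_forall_uIcc (h : IsConnectingSolution V c A B q α ω) {τ t : ℝ}
    (hτ : τ ∈ realIoo α ω) (hV : ∀ u ∈ uIcc τ t, c < V (q u)) : t ∈ realIoo α ω :=
  h.mem_realIoo_of_lt_potential (hV _ (clamp_mem_uIcc hτ))

lemma norm_le_of_mc_le (h : IsConnectingSolution V c A B q α ω) (hs : SplitsSublevel V c am ap A B)
    {k ρ M : ℝ} (hk : 0 < k) (hρ : ∀ x, ρ ≤ ‖x‖ → c + k ≤ V x)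
    (hamρ : ‖am‖ + dist am ap / 2 ≤ ρ) (hM : 0 ≤ M) (hmc : mc V c A B ≤ ENNReal.ofReal M) (t : ℝ) :
    ‖q t‖ ≤ ρ + (1 + k⁻¹) * M := by
  refine h.norm_le _ (fun s hs' => ?_) t
  have hle := h.isMinimizer.norm_le hs hk hρ hamρ hM hmc s
  rwa [Function.comp_apply, clamp_of_mem hs'] at hle

end IsConnectingSolution

section ZeroEnergy

variable {N : ℕ} {V : Euc N → ℝ} {am ap : Euc N}

/-- Hypothesis (V1) on the zeros of a double-well potential. -/
structure IsDoubleWell (V : Euc N → ℝ) (am ap : Euc N) : Prop where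
  left_eq : V am = 0
  right_eq : V ap = 0
  pos : ∀ x, x ≠ am → x ≠ ap → 0 < V x

namespace IsDoubleWell

lemma symm (h : IsDoubleWell V am ap) : IsDoubleWell V ap am :=
  ⟨h.right_eq, h.left_eq, fun x hp hm => h.pos x hm hp⟩

lemma eq_or_eq_of_potential_eq_zero (h : IsDoubleWell V am ap) {x : Euc N} (hx : V x = 0) :
    x = am ∨ x = ap := by
  by_contra! hne
  exact (h.pos x hne.1 hne.2).ne' hx

lemma nonneg (h : IsDoubleWell V am ap) (x : Euc N) : 0 ≤ V x := by
  rcases eq_or_ne x am with rfl | hm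
  · exact h.left_eq.ge
  rcases eq_or_ne x ap with rfl | hp
  · exact h.right_eq.ge
  exact (h.pos x hm hp).le

lemma tendsto_left_of_tendsto_potential (h : IsDoubleWell V am ap) (hV : Continuous V)
    {ι : Type*} {l : Filter ι} {f : ι → Euc N} {R r : ℝ} (hR : ∀ i, ‖f i‖ ≤ R) (hr : 0 < r)
    (hfar : ∀ᶠ i in l, r ≤ dist (f i) ap) (hlim : Tendsto (fun i => V (f i)) l (𝓝 0)) :
    Tendsto f l (𝓝 am) := by
  have hclosed : IsClosed {x : Euc N | r ≤ dist x ap} :=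
    isClosed_le continuous_const (continuous_id.dist continuous_const)
  refine tendsto_of_tendsto_comp_of_isCompact
    ((isCompact_closedBall 0 R).inter_right hclosed) ?_ hV (fun x hx hVx => ?_)
    (by rwa [h.left_eq])
  · filter_upwards [hfar] with i hi using ⟨mem_closedBall_zero_iff.2 (hR i), hi⟩
  · refine (h.eq_or_eq_of_potential_eq_zero (hVx.trans h.left_eq)).resolve_right ?_
    rintro rfl
    exact hr.not_ge (by simpa using hx.2)

end IsDoubleWell

/-- The first-order form of `q̈ = ∇V(q)` on phase space. -/
def newtonField (V : Euc N → ℝ) (z : Euc N × Euc N) : Euc N × Euc N := (z.2, gradient V z.1)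

lemma exists_isCompact_phase (hV : Continuous V) (R : ℝ) :
    ∃ K : Set (Euc N × Euc N), IsCompact K ∧
      ∀ x p, ‖x‖ ≤ R → 2⁻¹ * ‖p‖ ^ 2 ≤ V x → (x, p) ∈ K := by
  obtain ⟨C, hC⟩ := (isCompact_closedBall (0 : Euc N) R).bddAbove_image hV.continuousOn
  refine ⟨closedBall 0 R ×ˢ closedBall 0 (1 + C),
    (isCompact_closedBall _ _).prod (isCompact_closedBall _ _), fun x p hx hp => ?_⟩
  have hball : x ∈ closedBall 0 R := mem_closedBall_zero_iff.2 hx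
  refine ⟨hball, mem_closedBall_zero_iff.2 ?_⟩
  nlinarith [hC (mem_image_of_mem V hball), sq_nonneg (‖p‖ - 1)]

/-- A solution of `q̈ = ∇V(q)` with velocity `p` and zero energy. -/
structure IsZeroEnergyOrbit (V : Euc N → ℝ) (q p : ℝ → Euc N) : Prop where
  hasDerivAt : ∀ t, HasDerivAt q (p t) t
  hasDerivAt_velocity : ∀ t, HasDerivAt p (gradient V (q t)) t
  energy : ∀ t, 2⁻¹ * ‖p t‖ ^ 2 = V (q t)

namespace IsZeroEnergyOrbit

variable {q p : ℝ → Euc N} {R : ℝ}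

lemma continuous (h : IsZeroEnergyOrbit V q p) : Continuous q :=
  continuous_iff_continuousAt.2 fun t => (h.hasDerivAt t).continuousAt

lemma deriv_eq (h : IsZeroEnergyOrbit V q p) : deriv q = p :=
  funext fun t => (h.hasDerivAt t).deriv

lemma deriv_velocity_eq (h : IsZeroEnergyOrbit V q p) : deriv p = fun t => gradient V (q t) :=
  funext fun t => (h.hasDerivAt_velocity t).deriv

lemma contDiff (h : IsZeroEnergyOrbit V q p) (hgrad : Continuous (gradient V)) :
    ContDiff ℝ 2 q := by
  refine (contDiff_succ_iff_deriv (n := 1)).2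
    ⟨fun t => (h.hasDerivAt t).differentiableAt, by simp, ?_⟩
  rw [h.deriv_eq, contDiff_one_iff_deriv, h.deriv_velocity_eq]
  exact ⟨fun t => (h.hasDerivAt_velocity t).differentiableAt, hgrad.comp h.continuous⟩

/- A zero of `V` on the orbit is an equilibrium of the Newton flow. -/
lemma potential_pos (h : IsZeroEnergyOrbit V q p) (hV : Continuous V)
    (hlip : LocallyLipschitz (gradient V)) (hnonneg : ∀ x, 0 ≤ V x) (hR : ∀ t, ‖q t‖ ≤ R)
    {t₀ : ℝ} (ht₀ : 0 < V (q t₀)) (t : ℝ) : 0 < V (q t) := by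
  refine (hnonneg _).lt_of_ne' fun hzero => ?_
  obtain ⟨K, hK, hphase⟩ := exists_isCompact_phase hV R
  have hrest : p t = 0 := by simpa [hzero] using h.energy t
  have hcrit : gradient V (q t) = 0 :=
    gradient_eq_zero_of_isLocalMin (.of_forall fun x => hzero.trans_le (hnonneg x))
  have hconst := eq_const_of_eq_equilibrium (z := fun t => (q t, p t)) (X := newtonField V)
    (LipschitzWith.prod_snd.locallyLipschitz.prodMk
      (hlip.comp LipschitzWith.prod_fst.locallyLipschitz)) hK
    (fun s => (h.hasDerivAt s).prodMk (h.hasDerivAt_velocity s))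
    (fun s => hphase _ _ (hR s) (h.energy s).le) (t₀ := t)
    (by rw [newtonField, hrest, hcrit, Prod.mk_zero_zero]) t₀
  rw [(Prod.mk.inj hconst).1, hzero] at ht₀
  exact ht₀.false

lemma tendsto_potential (h : IsZeroEnergyOrbit V q p) (hV : ContDiff ℝ 1 V)
    (hnonneg : ∀ x, 0 ≤ V x) (hR : ∀ t, ‖q t‖ ≤ R)
    (hfin : ∫⁻ t, ENNReal.ofReal (V (q t)) ≠ ⊤) :
    Tendsto (fun t => V (q t)) atBot (𝓝 0) ∧ Tendsto (fun t => V (q t)) atTop (𝓝 0) := by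
  obtain ⟨K, hK, hphase⟩ := exists_isCompact_phase hV.continuous R
  have hmem : ∀ t, (q t, p t) ∈ K := fun t => hphase _ _ (hR t) (h.energy t).le
  obtain ⟨M, hM⟩ := hK.exists_bound_of_continuousOn (f := fun z => V z.1)
    (hV.continuous.comp continuous_fst).continuousOn
  obtain ⟨L, hL⟩ := hK.exists_bound_of_continuousOn (f := fun z => fderiv ℝ V z.1 z.2)
    (((hV.continuous_fderiv one_ne_zero).comp continuous_fst).clm_apply
      continuous_snd).continuousOn
  refine tendsto_zero_of_integrable_of_bounded_deriv (h' := fun t => fderiv ℝ V (q t) (p t))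
    (fun t => ?_) (fun t => hM _ (hmem t)) (fun t => hL _ (hmem t)) ?_
  · exact (hV.differentiable one_ne_zero (q t)).hasFDerivAt.comp_hasDerivAt t (h.hasDerivAt t)
  · have hcont : Continuous fun t => V (q t) := hV.continuous.comp h.continuous
    exact (lintegral_ofReal_ne_top_iff_integrable hcont.aestronglyMeasurable
      (ae_of_all _ fun _ => hnonneg _)).1 hfin

lemma tendsto_velocity (h : IsZeroEnergyOrbit V q p) {l : Filter ℝ}
    (hlim : Tendsto (fun t => V (q t)) l (𝓝 0)) : Tendsto p l (𝓝 0) := by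
  have hspeed : ∀ t, ‖p t‖ = √(2 * V (q t)) := fun t => by
    rw [← h.energy, mul_inv_cancel_left₀ two_ne_zero, Real.sqrt_sq (norm_nonneg _)]
  simpa [tendsto_zero_iff_norm_tendsto_zero, hspeed] using (hlim.const_mul 2).sqrt

/- The potential energy spent after time `0` is positive, whereas little is left to spend once the
orbit is close to `ap`. -/
lemma exists_forall_le_dist (h : IsZeroEnergyOrbit V q p) (hV : Continuous V)
    (hVap : V ap = 0) (hpos : ∀ t, 0 < V (q t)) {δ : ℝ} (hδ : 0 < δ)
    (htail : ∀ s r K, r ≤ δ → dist (q s) ap < r → (∀ x ∈ closedBall ap r, V x ≤ K) →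
      ∫⁻ t in Ioi s, ENNReal.ofReal (V (q t)) ≤ ENNReal.ofReal (2⁻¹ * r ^ 2 + K)) :
    ∃ r > 0, ∀ t ≤ 0, r ≤ dist (q t) ap := by
  obtain ⟨η, hη, hlow⟩ : ∃ η > 0,
      ∀ s ≤ 0, ENNReal.ofReal η < ∫⁻ t in Ioi s, ENNReal.ofReal (V (q t)) := by
    have hm : 0 < ∫⁻ t in Ioi (0 : ℝ), ENNReal.ofReal (V (q t)) := by
      have hcont : Continuous fun t => V (q t) := hV.comp h.continuous
      have hsupport : Function.support (fun t => ENNReal.ofReal (V (q t))) = univ :=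
        eq_univ_of_forall fun t => (ENNReal.ofReal_pos.2 (hpos t)).ne'
      simp [setLIntegral_pos_iff hcont.measurable.ennreal_ofReal, hsupport]
    obtain ⟨η, hη, hηm⟩ := ENNReal.lt_iff_exists_nnreal_btwn.1 hm
    refine ⟨η, ENNReal.coe_pos.1 hη, fun s hs => ?_⟩
    rw [ENNReal.ofReal_coe_nnreal]
    exact hηm.trans_le (lintegral_mono_set (Ioi_subset_Ioi hs))
  obtain ⟨ε, hε, hball⟩ := nhds_basis_closedBall.eventually_iff.1
    (hV.continuousAt.eventually_lt_const (hVap.trans_lt (half_pos hη)))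
  refine ⟨min (min ε δ) (min 1 η), by positivity, fun t ht => not_lt.1 fun hlt => ?_⟩
  set r := min (min ε δ) (min 1 η)
  have hrε : r ≤ ε := (min_le_left _ _).trans (min_le_left _ _)
  have hrδ : r ≤ δ := (min_le_left _ _).trans (min_le_right _ _)
  have hr1 : r ≤ 1 := (min_le_right _ _).trans (min_le_left _ _)
  have hrη : r ≤ η := (min_le_right _ _).trans (min_le_right _ _)
  have hlt' := (hlow t ht).trans_le (htail t r (η / 2) hrδ hlt fun x hx =>
    (hball (closedBall_subset_closedBall hrε hx)).le)
  rw [ENNReal.ofReal_lt_ofReal_iff_of_nonneg hη.le] at hlt'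
  nlinarith [dist_nonneg.trans_lt hlt]

end IsZeroEnergyOrbit

end ZeroEnergy

section Limit

variable {N : ℕ} {V : Euc N → ℝ} {am ap : Euc N}

lemma SplitsSublevel.nonneg {c : ℝ} {A B : Set (Euc N)} (h : SplitsSublevel V c am ap A B)
    (hw : IsDoubleWell V am ap) : 0 ≤ c :=
  hw.left_eq.ge.trans (h.potential_le_of_mem_left h.left_mem)

lemma exists_forall_norm_le (hV : Continuous V) (hw : IsDoubleWell V am ap) {b ρ : ℝ} (hb : 0 < b)
    (hVinf : ∀ x, ρ ≤ ‖x‖ → b ≤ V x) :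
    ∃ R, ∀ {c A B q α ω}, c ≤ b / 2 → SplitsSublevel V c am ap A B →
      IsConnectingSolution V c A B q α ω → ∀ t, ‖q t‖ ≤ R := by
  obtain ⟨M, hM⟩ := exists_forall_mc_le hV am ap
  refine ⟨_, fun {c A B q α ω} hc hs hq => hq.norm_le_of_mc_le hs (half_pos hb) (fun x hx => ?_)
    (le_max_right ρ _) (abs_nonneg M) ((hM hs).trans (ENNReal.ofReal_le_ofReal ?_))⟩
  · linarith [hVinf x (le_of_max_le_left hx)]
  · linarith [le_abs_self M, hs.nonneg hw]

variable {c τ : ℕ → ℝ} {A B : ℕ → Set (Euc N)} {q : ℕ → ℝ → Euc N} {α ω : ℕ → EReal}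
  {q₀ p₀ : ℝ → Euc N} {R : ℝ}

lemma exists_subseq_isZeroEnergyOrbit (hV : Continuous V) (hgrad : Continuous (gradient V))
    (hc : Tendsto c atTop (𝓝 0)) (hc0 : ∀ n, 0 ≤ c n)
    (hq : ∀ n, IsConnectingSolution V (c n) (A n) (B n) (q n) (α n) (ω n))
    (hR : ∀ n t, ‖q n t‖ ≤ R) (τ : ℕ → ℝ) :
    ∃ φ : ℕ → ℕ, StrictMono φ ∧ ∃ q₀ p₀, IsZeroEnergyOrbit V q₀ p₀ ∧
      TendstoLocallyUniformly (fun n t => q (φ n) (t + τ (φ n))) q₀ atTop ∧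
      TendstoLocallyUniformly (fun n t => deriv (q (φ n)) (t + τ (φ n))) p₀ atTop := by
  obtain ⟨K, hK, hphase⟩ := exists_isCompact_phase hV R
  have hderiv : ∀ n t, HasDerivAt (fun t => (q n (t + τ n), deriv (q n) (t + τ n)))
      (newtonField V (q n (t + τ n), deriv (q n) (t + τ n))) t := fun n t =>
    (((hq n).hasDerivAt _).comp_add_const t (τ n)).prodMk
      (((hq n).hasDerivAt_deriv _).comp_add_const t (τ n))
  obtain ⟨φ, hφ, z₀, hz, -, hz₀⟩ := exists_subseq_tendsto_solution
    (X := newtonField V) (continuous_snd.prodMk (hgrad.comp continuous_fst)) hK hderiv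
    fun n t => hphase _ _ (hR n _) (by linarith [(hq n).energy (t + τ n), hc0 n])
  refine ⟨φ, hφ, fun t => (z₀ t).1, fun t => (z₀ t).2,
    ⟨fun t => (hasFDerivAt_fst (p := z₀ t)).comp_hasDerivAt t (hz₀ t),
      fun t => (hasFDerivAt_snd (p := z₀ t)).comp_hasDerivAt t (hz₀ t), fun t => ?_⟩,
    uniformContinuous_fst.comp_tendstoLocallyUniformly hz,
    uniformContinuous_snd.comp_tendstoLocallyUniformly hz⟩
  have hzt := hz.tendstoLocallyUniformlyOn.tendsto_at (mem_univ t)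
  have hkinetic := (hzt.snd_nhds.norm.pow 2).const_mul 2⁻¹
  have hpotential := ((hV.tendsto _).comp hzt.fst_nhds).sub (hc.comp hφ.tendsto_atTop)
  rw [sub_zero] at hpotential
  refine tendsto_nhds_unique (hkinetic.congr fun n => ?_) hpotential
  simp only [Function.comp_apply]
  linarith [(hq (φ n)).energy (t + τ (φ n))]

lemma lintegral_potential_le_of_eventually_lagJ_le (hV : Continuous V) (hc : Tendsto c atTop (𝓝 0))
    {Q Q' : ℕ → ℝ → Euc N} (hQ : ∀ n, Continuous (Q n))
    (hlim : ∀ t, Tendsto (fun n => Q n (t + τ n)) atTop (𝓝 (q₀ t)))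
    {J : Set ℝ} (hJ : MeasurableSet J) {M : ℝ≥0∞}
    (hM : ∀ᶠ n in atTop, lagJ V (c n) (Q n) (Q' n) ((· - τ n) ⁻¹' J) ≤ M) :
    ∫⁻ t in J, ENNReal.ofReal (V (q₀ t)) ≤ M := by
  have hpt : ∀ t, Tendsto (fun n => ENNReal.ofReal (V (Q n (t + τ n)) - c n)) atTop
      (𝓝 (ENNReal.ofReal (V (q₀ t)))) := fun t => by
    simpa using ENNReal.tendsto_ofReal (((hV.tendsto _).comp (hlim t)).sub hc)
  calc ∫⁻ t in J, ENNReal.ofReal (V (q₀ t))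
      = ∫⁻ t in J, liminf (fun n => ENNReal.ofReal (V (Q n (t + τ n)) - c n)) atTop :=
        lintegral_congr fun t => (hpt t).liminf_eq.symm
    _ ≤ liminf (fun n => ∫⁻ t in J, ENNReal.ofReal (V (Q n (t + τ n)) - c n)) atTop :=
        lintegral_liminf_le fun n => by fun_prop
    _ ≤ M := by
        refine liminf_le_of_frequently_le' (hM.mono fun n hn => ?_).frequently
        have hshift := lintegral_potential_comp_add_const_le_lagJ (c := c n) (q' := Q' n) hV (hQ n)
          (hJ.preimage (measurable_sub_const (τ n))) (τ n)
        rw [preimage_preimage] at hshift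
        simp only [add_sub_cancel_right, preimage_id'] at hshift
        exact hshift.trans hn

/-- The translates of connecting solutions `q n` by departure times from the left well converge to
`q₀`, while the energies `-c n` tend to `0`. -/
structure IsDepartureLimit (V : Euc N → ℝ) (am ap : Euc N) (c τ : ℕ → ℝ) (A B : ℕ → Set (Euc N))
    (q : ℕ → ℝ → Euc N) (α ω : ℕ → EReal) (q₀ : ℝ → Euc N) : Prop where
  tendsto_level : Tendsto c atTop (𝓝 0)
  splits : ∀ n, SplitsSublevel V (c n) am ap (A n) (B n)
  connecting : ∀ n, IsConnectingSolution V (c n) (A n) (B n) (q n) (α n) (ω n)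
  departure : ∀ n, IsDepartureTime am (dist am ap / 2) (q n) (α n) (ω n) (τ n)
  tendsto : TendstoLocallyUniformly (fun n t => q n (t + τ n)) q₀ atTop

namespace IsDepartureLimit

lemma tendsto_at (h : IsDepartureLimit V am ap c τ A B q α ω q₀) (t : ℝ) :
    Tendsto (fun n => q n (t + τ n)) atTop (𝓝 (q₀ t)) :=
  h.tendsto.tendstoLocallyUniformlyOn.tendsto_at (mem_univ t)

lemma continuous (h : IsDepartureLimit V am ap c τ A B q α ω q₀) : Continuous q₀ :=
  h.tendsto.continuous <| .of_forall fun n =>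
    (h.connecting n).continuous.comp (continuous_add_const (τ n))

lemma dist_zero (h : IsDepartureLimit V am ap c τ A B q α ω q₀) :
    dist (q₀ 0) am = dist am ap / 2 :=
  tendsto_nhds_unique ((h.tendsto_at 0).dist tendsto_const_nhds) <|
    tendsto_const_nhds.congr fun n => by rw [zero_add, (h.departure n).dist_eq]

/- On the compact interval between `0` and `t` the potential along `q₀` stays away from `0`, so that
`q n` cannot reach an end of its connecting interval there. -/
lemma eventually_add_mem_realIoo (h : IsDepartureLimit V am ap c τ A B q α ω q₀)
    (hV : Continuous V) (hpos : ∀ t, 0 < V (q₀ t)) (t : ℝ) :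
    ∀ᶠ n in atTop, t + τ n ∈ realIoo (α n) (ω n) := by
  obtain ⟨s, -, hs⟩ := isCompact_uIcc.exists_isMinOn (nonempty_uIcc (a := 0) (b := t))
    (hV.comp h.continuous).continuousOn
  have hVlim := tendstoLocallyUniformly_continuous_comp hV
    (fun n => (h.connecting n).continuous.comp (continuous_add_const (τ n))) h.continuous h.tendsto
  have hVlim' := (tendstoLocallyUniformlyOn_iff_tendstoUniformlyOn_of_compact
    (isCompact_uIcc (a := 0) (b := t))).1 hVlim.tendstoLocallyUniformlyOn
  filter_upwards [Metric.tendstoUniformlyOn_iff.1 hVlim' _ (half_pos (hpos s)),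
    h.tendsto_level.eventually_lt_const (half_pos (hpos s))] with n hn hcn
  refine (h.connecting n).mem_realIoo_of_forall_uIcc (h.departure n).mem fun u hu => ?_
  have hu' : u - τ n ∈ uIcc 0 t := by
    rwa [← mem_preimage (f := (· - τ n)), preimage_sub_const_uIcc, zero_add]
  have hclose := hn _ hu'
  rw [Real.dist_eq, Function.comp_apply, sub_add_cancel] at hclose
  have hmin : V (q₀ s) ≤ V (q₀ (u - τ n)) := hs hu'
  linarith [(abs_lt.1 hclose).2]

lemma tendsto_comp_clamp_at (h : IsDepartureLimit V am ap c τ A B q α ω q₀)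
    (hV : Continuous V) (hpos : ∀ t, 0 < V (q₀ t)) (t : ℝ) :
    Tendsto (fun n => q n (clamp (α n) (ω n) (t + τ n))) atTop (𝓝 (q₀ t)) := by
  refine (h.tendsto_at t).congr' ?_
  filter_upwards [h.eventually_add_mem_realIoo hV hpos t] with n hn
  rw [clamp_of_mem hn]

lemma le_dist (h : IsDepartureLimit V am ap c τ A B q α ω q₀) (hV : Continuous V)
    (hpos : ∀ t, 0 < V (q₀ t)) {t : ℝ} (ht : 0 ≤ t) : dist am ap / 2 ≤ dist (q₀ t) am :=
  ge_of_tendsto' ((h.tendsto_comp_clamp_at hV hpos t).dist tendsto_const_nhds) fun n =>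
    (h.departure n).le_dist _ (le_add_of_nonneg_left ht)

lemma lintegral_potential_le (h : IsDepartureLimit V am ap c τ A B q α ω q₀) (hV : Continuous V)
    (hpos : ∀ t, 0 < V (q₀ t)) {J : Set ℝ} (hJ : MeasurableSet J) {M : ℝ≥0∞}
    (hM : ∀ᶠ n in atTop, lagJ V (c n) (q n ∘ clamp (α n) (ω n))
      ((realIoo (α n) (ω n)).indicator (deriv (q n))) ((· - τ n) ⁻¹' J) ≤ M) :
    ∫⁻ t in J, ENNReal.ofReal (V (q₀ t)) ≤ M :=
  lintegral_potential_le_of_eventually_lagJ_le hV h.tendsto_level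
    (fun n => (h.connecting n).continuous.comp (continuous_clamp (h.connecting n).lt))
    (h.tendsto_comp_clamp_at hV hpos) hJ hM

lemma lintegral_potential_ne_top (h : IsDepartureLimit V am ap c τ A B q α ω q₀)
    (hV : Continuous V) (hw : IsDoubleWell V am ap) (hpos : ∀ t, 0 < V (q₀ t)) :
    ∫⁻ t, ENNReal.ofReal (V (q₀ t)) ≠ ⊤ := by
  obtain ⟨M, hM⟩ := exists_forall_mc_le hV am ap
  rw [← setLIntegral_univ]
  refine ne_top_of_le_ne_top (ENNReal.ofReal_ne_top (r := M))
    (h.lintegral_potential_le hV hpos MeasurableSet.univ (.of_forall fun n => ?_))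
  rw [preimage_univ, (h.connecting n).isMinimizer.lagJ_eq]
  exact (hM (h.splits n)).trans
    (ENNReal.ofReal_le_ofReal (sub_le_self _ ((h.splits n).nonneg hw)))

lemma lintegral_potential_Ioi_le (h : IsDepartureLimit V am ap c τ A B q α ω q₀)
    (hV : Continuous V) (hw : IsDoubleWell V am ap) (hpos : ∀ t, 0 < V (q₀ t)) {s r K : ℝ}
    (hr : r ≤ dist am ap / 2) (hd : dist (q₀ s) ap < r) (hK : ∀ x ∈ closedBall ap r, V x ≤ K) :
    ∫⁻ t in Ioi s, ENNReal.ofReal (V (q₀ t)) ≤ ENNReal.ofReal (2⁻¹ * r ^ 2 + K) := by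
  refine h.lintegral_potential_le hV hpos measurableSet_Ioi ?_
  filter_upwards [((h.tendsto_comp_clamp_at hV hpos s).dist
    tendsto_const_nhds).eventually_lt_const hd] with n hn
  rw [preimage_sub_const_Ioi]
  exact (h.connecting n).isMinimizer.lagJ_Ioi_le_of_dist_le (h.splits n) hV hr hn.le
    fun x hx => (sub_le_self _ ((h.splits n).nonneg hw)).trans (hK x hx)

lemma tendsto_heteroclinic (h : IsDepartureLimit V am ap c τ A B q α ω q₀)
    (horbit : IsZeroEnergyOrbit V q₀ p₀) (hV : ContDiff ℝ 1 V)
    (hlip : LocallyLipschitz (gradient V)) (hw : IsDoubleWell V am ap) (hR : ∀ t, ‖q₀ t‖ ≤ R) :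
    Tendsto q₀ atBot (𝓝 am) ∧ Tendsto q₀ atTop (𝓝 ap) ∧
      Tendsto p₀ atBot (𝓝 0) ∧ Tendsto p₀ atTop (𝓝 0) := by
  have hVc := hV.continuous
  have hd : 0 < dist am ap / 2 := half_pos (h.splits 0).dist_pos
  have hV0 : 0 < V (q₀ 0) := hw.pos _
    (dist_pos.1 (hd.trans_eq h.dist_zero.symm)) fun heq => by
      have hdist := h.dist_zero
      rw [heq, dist_comm] at hdist
      linarith
  have hpos := horbit.potential_pos hVc hlip hw.nonneg hR hV0
  obtain ⟨hVbot, hVtop⟩ :=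
    horbit.tendsto_potential hV hw.nonneg hR (h.lintegral_potential_ne_top hVc hw hpos)
  obtain ⟨r, hr, hfar⟩ := horbit.exists_forall_le_dist hVc hw.right_eq hpos hd
    fun s r K hr hs hK => h.lintegral_potential_Ioi_le hVc hw hpos hr hs hK
  exact ⟨hw.tendsto_left_of_tendsto_potential hVc hR hr
      ((eventually_le_atBot 0).mono hfar) hVbot,
    hw.symm.tendsto_left_of_tendsto_potential hVc hR hd
      ((eventually_ge_atTop 0).mono fun t ht => h.le_dist hVc hpos ht) hVtop,
    horbit.tendsto_velocity hVbot, horbit.tendsto_velocity hVtop⟩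

end IsDepartureLimit

end Limit

theorem doublewell_convergence_general {N : ℕ} {V : Euc N → ℝ} (hV : ContDiff ℝ 1 V)
    (hlip : LocallyLipschitz (gradient V)) {am ap : Euc N} (hw : IsDoubleWell V am ap)
    {b ρ : ℝ} (hb : 0 < b) (hVinf : ∀ x, ρ ≤ ‖x‖ → b ≤ V x)
    {c : ℕ → ℝ} (hc : Tendsto c atTop (𝓝 0)) {A B : ℕ → Set (Euc N)}
    (hsplit : ∀ n, SplitsSublevel V (c n) am ap (A n) (B n))
    {q : ℕ → ℝ → Euc N} {α ω : ℕ → EReal}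
    (hq : ∀ n, IsConnectingSolution V (c n) (A n) (B n) (q n) (α n) (ω n)) :
    ∃ φ : ℕ → ℕ, StrictMono φ ∧ ∃ ζ : ℕ → ℝ, ∃ q₀ : ℝ → Euc N,
      ContDiff ℝ 2 q₀ ∧
      (∀ t, deriv (deriv q₀) t = gradient V (q₀ t)) ∧
      Tendsto q₀ atBot (𝓝 am) ∧ Tendsto q₀ atTop (𝓝 ap) ∧
      Tendsto (deriv q₀) atBot (𝓝 0) ∧ Tendsto (deriv q₀) atTop (𝓝 0) ∧
      TendstoLocallyUniformly (fun n t => q (φ n) (t - ζ n)) q₀ atTop ∧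
      TendstoLocallyUniformly (fun n t => deriv (q (φ n)) (t - ζ n)) (deriv q₀) atTop ∧
      TendstoLocallyUniformly (fun n t => deriv (deriv (q (φ n))) (t - ζ n))
        (deriv (deriv q₀)) atTop := by
  obtain ⟨R, hR⟩ := exists_forall_norm_le hV.continuous hw hb hVinf
  obtain ⟨n₀, hn₀⟩ := eventually_atTop.1 (hc.eventually_le_const (half_pos hb))
  choose τ hτ using fun n => (hq n).exists_isDepartureTime (hsplit n)
  obtain ⟨φ, hφ, q₀, p₀, horbit, hq₀, hp₀⟩ := exists_subseq_isZeroEnergyOrbit hV.continuous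
    hlip.continuous ((tendsto_add_atTop_iff_nat n₀).2 hc) (fun n => (hsplit _).nonneg hw)
    (fun n => hq (n + n₀)) (fun n => hR (hn₀ _ le_add_self) (hsplit _) (hq _))
    fun n => τ (n + n₀)
  set ψ : ℕ → ℕ := fun n => φ n + n₀
  have hψ : StrictMono ψ := hφ.add_const n₀
  have hlimit : IsDepartureLimit V am ap (c ∘ ψ) (τ ∘ ψ) (A ∘ ψ) (B ∘ ψ) (q ∘ ψ) (α ∘ ψ) (ω ∘ ψ)
      q₀ := ⟨hc.comp hψ.tendsto_atTop, fun n => hsplit _, fun n => hq _, fun n => hτ _, hq₀⟩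
  have hRq₀ : ∀ t, ‖q₀ t‖ ≤ R := fun t =>
    le_of_tendsto' (hlimit.tendsto_at t).norm fun n => hR (hn₀ _ le_add_self) (hsplit _) (hq _) _
  have hgrad : TendstoLocallyUniformly (fun n t => gradient V (q (ψ n) (t + τ (ψ n))))
      (fun t => gradient V (q₀ t)) atTop :=
    tendstoLocallyUniformly_continuous_comp hlip.continuous
      (fun n => (hq _).continuous.comp (continuous_add_const _)) horbit.continuous hq₀
  obtain ⟨hbot, htop, hpbot, hptop⟩ := hlimit.tendsto_heteroclinic horbit hV hlip hw hRq₀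
  refine ⟨ψ, hψ, fun n => -τ (ψ n), q₀, horbit.contDiff hlip.continuous, ?_, hbot, htop, ?_⟩
  · simp [horbit.deriv_eq, horbit.deriv_velocity_eq]
  · simp only [horbit.deriv_eq, horbit.deriv_velocity_eq, sub_neg_eq_add, (hq _).deriv_deriv]
    exact ⟨hpbot, hptop, hq₀, hp₀, hgrad⟩

/-- Proposition 3.2 (double-well convergence): as `c_n → 0⁺`, the connecting solutions with
energies `−c_n`, suitably translated and up to a subsequence, converge in `C²_loc` to a
heteroclinic solution between `a₋` and `a₊`. -/
theorem doublewell_convergence {N : ℕ} (hN : 0 < N) (V : Euc N → ℝ) (hV : ContDiff ℝ 1 V)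
    (hlip : LocallyLipschitz (gradient V))
    (am ap : Euc N) (hne : am ≠ ap) (hVam : V am = 0) (hVap : V ap = 0)
    (hVpos : ∀ x, x ≠ am → x ≠ ap → 0 < V x)
    (ν₀ : ℝ) (hν₀ : 0 < ν₀)
    (hliminf₁ : ∀ b : ℝ, b < ν₀ → ∃ ρ : ℝ, ∀ x : Euc N, ρ ≤ ‖x‖ → b < V x)
    (hliminf₂ : ∀ b : ℝ, ν₀ < b → ∀ ρ : ℝ, ∃ x : Euc N, ρ ≤ ‖x‖ ∧ V x < b)
    (cdw : ℝ) (hcdw0 : 0 < cdw) (hcdwν : cdw < ν₀)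
    (Vm Vp : ℝ → Set (Euc N))
    (hsets : ∀ c : ℝ, 0 ≤ c → c < cdw →
      IsCompact (Vm c) ∧ IsCompact (Vp c) ∧
      {x | V x ≤ c} = Vm c ∪ Vp c ∧ 0 < setDist (Vm c) (Vp c) ∧
      am ∈ Vm c ∧ Vm c ⊆ ball am (dist am ap / 4) ∧
      ap ∈ Vp c ∧ Vp c ⊆ ball ap (dist am ap / 4))
    (c : ℕ → ℝ) (hcpos : ∀ n, 0 < c n) (hclt : ∀ n, c n < cdw)
    (hc0 : Tendsto c atTop (𝓝 0))
    (q : ℕ → ℝ → Euc N)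
    (hsol : ∀ n, ContDiff ℝ 2 (q n) ∧
      (∀ t, deriv (deriv (q n)) t = gradient V (q n t)) ∧
      (∀ t, 2⁻¹ * ‖deriv (q n) t‖ ^ 2 - V (q n t) = -(c n)))
    (hconn : ∀ n, ∃ α ω : EReal, α < ω ∧
      (∀ t : ℝ, α < (t : EReal) → (t : EReal) < ω → c n < V (q n t)) ∧
      ((α = ⊥ → Tendsto (fun t => infDist (q n t) (Vm (c n))) atBot (𝓝 0)) ∧
       (∀ a : ℝ, α = (a : EReal) →
          Tendsto (fun t => infDist (q n t) (Vm (c n))) (𝓝[>] a) (𝓝 0) ∧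
          deriv (q n) a = 0 ∧ V (q n a) = c n ∧ q n a ∈ Vm (c n))) ∧
      ((ω = ⊤ → Tendsto (fun t => infDist (q n t) (Vp (c n))) atTop (𝓝 0)) ∧
       (∀ b : ℝ, ω = (b : EReal) →
          Tendsto (fun t => infDist (q n t) (Vp (c n))) (𝓝[<] b) (𝓝 0) ∧
          deriv (q n) b = 0 ∧ V (q n b) = c n ∧ q n b ∈ Vp (c n))) ∧
      lagJ V (c n) (q n) (deriv (q n)) {t : ℝ | α < (t : EReal) ∧ (t : EReal) < ω}
        = mc V (c n) (Vm (c n)) (Vp (c n)) ∧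
      (∀ M : ℝ, (∀ t : ℝ, α < (t : EReal) → (t : EReal) < ω → ‖q n t‖ ≤ M) →
        ∀ t : ℝ, ‖q n t‖ ≤ M)) :
    ∃ φ : ℕ → ℕ, StrictMono φ ∧ ∃ ζ : ℕ → ℝ, ∃ q₀ : ℝ → Euc N,
      ContDiff ℝ 2 q₀ ∧
      (∀ t, deriv (deriv q₀) t = gradient V (q₀ t)) ∧
      Tendsto q₀ atBot (𝓝 am) ∧ Tendsto q₀ atTop (𝓝 ap) ∧
      Tendsto (deriv q₀) atBot (𝓝 0) ∧ Tendsto (deriv q₀) atTop (𝓝 0) ∧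
      TendstoLocallyUniformly (fun n t => q (φ n) (t - ζ n)) q₀ atTop ∧
      TendstoLocallyUniformly (fun n t => deriv (q (φ n)) (t - ζ n)) (deriv q₀) atTop ∧
      TendstoLocallyUniformly (fun n t => deriv (deriv (q (φ n))) (t - ζ n))
        (deriv (deriv q₀)) atTop := by
  choose α ω hlt _ hleft hright hJ hnorm using hconn
  obtain ⟨ρ, hρ⟩ := hliminf₁ (ν₀ / 2) (half_lt_self hν₀)
  have hsplit : ∀ n, SplitsSublevel V (c n) am ap (Vm (c n)) (Vp (c n)) := fun n => by
    obtain ⟨-, -, heq, -, hm, hmball, hp, hpball⟩ := hsets (c n) (hcpos n).le (hclt n)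
    exact ⟨heq, hm, hp, hmball, hpball⟩
  have hq : ∀ n, IsConnectingSolution V (c n) (Vm (c n)) (Vp (c n)) (q n) (α n) (ω n) := fun n =>
    { contDiff := (hsol n).1
      deriv_deriv := (hsol n).2.1
      energy := (hsol n).2.2
      lt := hlt n
      left_bot := (hleft n).1
      left_coe := fun a ha => ⟨((hleft n).2 a ha).2.1, ((hleft n).2 a ha).2.2.2⟩
      right_top := (hright n).1
      right_coe := fun b hb => ⟨((hright n).2 b hb).2.1, ((hright n).2 b hb).2.2.2⟩
      lagJ_eq := hJ n
      norm_le := fun M hM => hnorm n M fun t hα hω => hM t ⟨hα, hω⟩ }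
  exact doublewell_convergence_general hV hlip ⟨hVam, hVap, hVpos⟩ (half_pos hν₀)
    (fun x hx => (hρ x hx).le) hc0 hsplit hq
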